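/- arXiv:1504.07290 — 15 statements merged into one kernel-verified Lean document; each statement's English description precedes it below -/
import Mathlib

section
/- There exists an edge-coloring of the complete graph on N = 3432 = C(14,7) vertices with colors in L = {r, b₀, b₁} that is good with respect to M₂. Consequently, f(2) := min{N : M₂ is realizable on K_N} satisfies f(2) ≤ 3432. -/
/-- The three colors: red `r` and the two blues `b0`, `b1`. -/
inductive Color where
  | r : Color
  | b0 : Color
  | b1 : Color
  deriving DecidableEq

/-- `M₂ = L³ \ {b₀,b₁}³`: the triples of colors that are not all blue. -/
def M2 (t : Color × Color × Color) : Prop :=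
  ¬ ((t.1 = Color.b0 ∨ t.1 = Color.b1) ∧ (t.2.1 = Color.b0 ∨ t.2.1 = Color.b1) ∧
     (t.2.2 = Color.b0 ∨ t.2.2 = Color.b1))

/-- `c` is an edge-coloring (symmetric) of the complete graph on `V` that is good with
respect to `M₂`, i.e. it satisfies conditions (i), (ii) and (iii). Here
`c(xyz) = (c(xy), c(yz), c(xz))`. -/
def Good {V : Type*} (c : V → V → Color) : Prop :=
  (∀ x y : V, x ≠ y → c x y = c y x) ∧
  -- (i)
  (∀ x y : V, x ≠ y → ∀ j k : Color, M2 (c x y, j, k) →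
    ∃ z : V, z ≠ x ∧ z ≠ y ∧ c y z = j ∧ c x z = k) ∧
  -- (ii)
  (∀ x y z : V, x ≠ y → y ≠ z → x ≠ z → M2 (c x y, c y z, c x z)) ∧
  -- (iii)
  (∀ x : V, ∀ ℓ : Color, ∃ y : V, y ≠ x ∧ c x y = ℓ)

abbrev FS := Finset (Fin 14)

/-- Paley-17 adjacency restricted to 14 vertices. -/
def gg (p q : Fin 14) : Bool := Nat.testBit 107286 ((p.val - q.val) + (q.val - p.val))

theorem gg_symm (p q : Fin 14) : gg p q = gg q p := by
  unfold gg; rw [Nat.add_comm]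

theorem gg_K4 : ∀ p q : Fin 14, p ≠ q → ∀ r, p ≠ r → q ≠ r → gg p q = gg p r → gg p q = gg q r →
    ∀ s, p ≠ s → q ≠ s → r ≠ s → gg p q = gg p s → gg p q = gg q s → gg p q = gg r s → False := by
  decide +kernel

theorem gg_dist : ∀ a b : Fin 14, a ≠ b → ∃ p, p ≠ a ∧ p ≠ b ∧ gg p a = true ∧ gg p b = false := by
  decide +kernel

def bad (a a' b b' p : Fin 14) : Bool :=
  (gg p a == gg p a') && ((gg p b == gg p b') && (!(gg p a == gg b b' && gg p b == gg a a') &&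
   (!(Nat.beq p a) && !(Nat.beq p a') && !(Nat.beq p b) && !(Nat.beq p b'))))

theorem gg_cnt0 : ∀ a a' : Fin 14, a < a' → ∀ b, ∀ b', b < b' → gg a a' ≠ gg b b' →
    gg a b = gg a' b' → gg a b' = gg a' b →  
    (Finset.univ.filter (fun p => bad a a' b b' p = true)).card ≤ 4 := by
  decide +kernel

theorem gg_cnt : ∀ a a' : Fin 14, a < a' → ∀ b, ∀ b', b < b' → gg a a' ≠ gg b b' →
    gg a b = gg a' b' → gg a b' = gg a' b →
    (Finset.univ.filter (fun p => p ≠ a ∧ p ≠ a' ∧ p ≠ b ∧ p ≠ b' ∧ gg p a = gg p a' ∧ gg p b = gg p b' ∧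
      ¬ (gg p a = gg b b' ∧ gg p b = gg a a'))).card ≤ 4 := by
  intro a a' h b b' h' h1 h2 h3
  refine le_trans (Finset.card_le_card ?_) (gg_cnt0 a a' h b b' h' h1 h2 h3)
  intro p
  simp only [Finset.mem_filter, Finset.mem_univ, true_and]
  rintro ⟨n1, n2, n3, n4, e1, e2, e3⟩
  have nb : ∀ q : Fin 14, p ≠ q → Nat.beq p q = false := by
    intro q hq
    rw [← Bool.not_eq_true, Nat.beq_eq]
    exact fun hh => hq (Fin.ext hh)
  unfold bad
  rw [nb _ n1, nb _ n2, nb _ n3, nb _ n4, e1, e2]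
  rw [e1, e2] at e3
  simp only [beq_self_eq_true, Bool.not_false, Bool.and_true, Bool.true_and, Bool.not_eq_true', Bool.and_eq_false_iff, beq_eq_false_iff_ne]
  tauto

theorem edge_in (S : FS) (hS : 4 ≤ S.card) (i : Bool) :
    ∃ p ∈ S, ∃ q ∈ S, p ≠ q ∧ gg p q = i := by
  by_contra! h
  have hh : ∀ p ∈ S, ∀ q ∈ S, p ≠ q → gg p q = !i := by
    intro p hp q hq hpq
    have := h p hp q hq hpq
    revert this; cases gg p q <;> cases i <;> simp
  obtain ⟨T, hT, hc⟩ := Finset.exists_subset_card_eq hS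
  obtain ⟨p, T1, hp, rfl, h1⟩ := Finset.card_eq_succ.1 hc
  obtain ⟨q, r, s, hqr, hqs, hrs, rfl⟩ := Finset.card_eq_three.1 h1
  simp only [Finset.mem_insert, Finset.mem_singleton, not_or] at hp
  have mp : p ∈ S := hT (by simp)
  have mq : q ∈ S := hT (by simp)
  have mr : r ∈ S := hT (by simp)
  have ms : s ∈ S := hT (by simp)
  obtain ⟨a, b, c⟩ := hp
  refine gg_K4 p q a r b hqr ?_ ?_ s c hqs hrs ?_ ?_ ?_ <;>
  · rw [hh _ mp _ mq a]; symm; apply hh <;> assumption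

theorem edge_to (S : FS) (hS : 3 ≤ S.card) (i : Bool) (p : Fin 14) (hp : p ∉ S)
    (hn : ¬ ∃ a ∈ S, ∃ b ∈ S, a ≠ b ∧ gg a b = i) : ∃ a ∈ S, gg p a = i := by
  obtain ⟨u, hu, v, hv, huv, e⟩ := edge_in (insert p S) (by rw [Finset.card_insert_of_notMem hp]; omega) i
  rw [Finset.mem_insert] at hu hv
  rcases hu with rfl | hu <;> rcases hv with rfl | hv
  · exact absurd rfl huv
  · exact ⟨v, hv, e⟩
  · exact ⟨u, hu, by rw [gg_symm]; exact e⟩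
  · exact absurd ⟨u, hu, v, hv, huv, e⟩ hn

def EE (x z : FS) (i : Bool) : Prop :=
  (∃ p q, p ≠ q ∧ x ∩ z = {p, q} ∧ gg p q = i) ∨
  (∃ p q, x ∩ z = {p} ∧ (x ∪ z)ᶜ = {q} ∧ gg p q = i)

theorem EE_symm {x z : FS} {i : Bool} (h : EE x z i) : EE z x i := by
  unfold EE at *; rwa [Finset.inter_comm, Finset.union_comm]

theorem EE_card {x z : FS} {i : Bool} (h : EE x z i) : (x ∩ z).card ≤ 2 := by
  rcases h with ⟨p, q, h, e, -⟩ | ⟨p, q, e, -⟩ <;> rw [e]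
  · exact Finset.card_le_two
  · simp

theorem pair_gg {p q p' q' : Fin 14} (hpq : p ≠ q) (h : ({p, q} : FS) = {p', q'}) : gg p q = gg p' q' := by
  have a : p ∈ ({p', q'} : FS) := h ▸ (by simp)
  have b : q ∈ ({p', q'} : FS) := h ▸ (by simp)
  simp only [Finset.mem_insert, Finset.mem_singleton] at a b
  rcases a with rfl | rfl <;> rcases b with rfl | rfl
  · exact absurd rfl hpq
  · rfl
  · exact gg_symm _ _
  · exact absurd rfl hpq

theorem EE_unique {x z : FS} {i j : Bool} (h : EE x z i) (h' : EE x z j) : i = j := by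
  rcases h with ⟨p, q, h, e, k⟩ | ⟨p, q, e, f, k⟩ <;>
    rcases h' with ⟨p', q', h', e', k'⟩ | ⟨p', q', e', f', k'⟩
  · rw [← k, ← k']; exact pair_gg h (e.symm.trans e')
  · have := congrArg Finset.card (e.symm.trans e'); rw [Finset.card_pair h] at this; simp at this
  · have := congrArg Finset.card (e.symm.trans e'); rw [Finset.card_pair h'] at this; simp at this
  · have h1 := Finset.singleton_injective (e.symm.trans e')
    have h2 := Finset.singleton_injective (f.symm.trans f')
    rw [← k, ← k', h1, h2]

open Classical in
noncomputable def col (x z : FS) : Color :=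
  if 3 ≤ (x ∩ z).card then Color.r else if EE x z true then Color.b0 else Color.b1

def bl (i : Bool) : Color := if i then Color.b0 else Color.b1

theorem col_EE {x z : FS} {i : Bool} (h : EE x z i) : col x z = bl i := by
  have := EE_card h
  unfold col
  rw [if_neg (by omega)]
  cases i
  · rw [if_neg]
    · simp [bl]
    · intro h'; exact absurd (EE_unique h h') (by simp)
  · simp [bl, h]

theorem col_r {x z : FS} : col x z = Color.r ↔ 3 ≤ (x ∩ z).card := by
  unfold col; split_ifs <;> simp_all

theorem col_symm (x z : FS) : col x z = col z x := by
  have : EE x z true ↔ EE z x true := ⟨EE_symm, EE_symm⟩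
  unfold col; rw [Finset.inter_comm x z]
  by_cases h : EE x z true
  · rw [if_pos h, if_pos (this.1 h)]
  · rw [if_neg h, if_neg (fun h' => h (this.2 h'))]

theorem mk (x y A' B' C' D' : FS) (hA : A' ⊆ x \ y) (hB : B' ⊆ y \ x) (hC : C' ⊆ x ∩ y)
    (hD : D' ⊆ (x ∪ y)ᶜ) (hc : A'.card + B'.card + C'.card + D'.card = 7) :
    ∃ z : FS, z.card = 7 ∧ x ∩ z = C' ∪ A' ∧ y ∩ z = C' ∪ B' ∧
      (x ∪ z)ᶜ = ((y \ x) \ B') ∪ ((x ∪ y)ᶜ \ D') ∧ (y ∪ z)ᶜ = ((x \ y) \ A') ∪ ((x ∪ y)ᶜ \ D') ∧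
      (x ∩ z).card = C'.card + A'.card ∧ (y ∩ z).card = C'.card + B'.card := by
  have e1 : ∀ p, p ∈ A' → p ∈ x ∧ p ∉ y := fun p hp => by simpa using hA hp
  have e2 : ∀ p, p ∈ B' → p ∈ y ∧ p ∉ x := fun p hp => by simpa using hB hp
  have e3 : ∀ p, p ∈ C' → p ∈ x ∧ p ∈ y := fun p hp => by simpa using hC hp
  have e4 : ∀ p, p ∈ D' → p ∉ x ∧ p ∉ y := fun p hp => by simpa using hD hp
  have h1 : x ∩ (A' ∪ B' ∪ C' ∪ D') = C' ∪ A' := by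
    ext p; have := e1 p; have := e2 p; have := e3 p; have := e4 p
    simp only [Finset.mem_inter, Finset.mem_union]; tauto
  have h2 : y ∩ (A' ∪ B' ∪ C' ∪ D') = C' ∪ B' := by
    ext p; have := e1 p; have := e2 p; have := e3 p; have := e4 p
    simp only [Finset.mem_inter, Finset.mem_union]; tauto
  refine ⟨A' ∪ B' ∪ C' ∪ D', ?_, h1, h2, ?_, ?_, ?_, ?_⟩
  · rw [Finset.card_union_of_disjoint, Finset.card_union_of_disjoint, Finset.card_union_of_disjoint, hc]
    all_goals
      rw [Finset.disjoint_left]; intro p; have := e1 p; have := e2 p; have := e3 p; have := e4 p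
      try simp only [Finset.mem_union]
      tauto
  · ext p; have := e1 p; have := e2 p; have := e3 p; have := e4 p
    simp only [Finset.mem_sdiff, Finset.mem_union, Finset.mem_compl]; tauto
  · ext p; have := e1 p; have := e2 p; have := e3 p; have := e4 p
    simp only [Finset.mem_sdiff, Finset.mem_union, Finset.mem_compl]; tauto
  · rw [h1, Finset.card_union_of_disjoint]
    rw [Finset.disjoint_left]; intro p; have := e1 p; have := e3 p; tauto
  · rw [h2, Finset.card_union_of_disjoint]
    rw [Finset.disjoint_left]; intro p; have := e2 p; have := e3 p; tauto

theorem cards (x y : FS) (hx : x.card = 7) (hy : y.card = 7) :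
    (x \ y).card + (x ∩ y).card = 7 ∧ (y \ x).card + (x ∩ y).card = 7 ∧
    (x ∪ y)ᶜ.card = (x ∩ y).card := by
  have h1 := Finset.card_sdiff_add_card_inter x y
  have h2 := Finset.card_sdiff_add_card_inter y x
  have h3 := Finset.card_union_add_card_inter x y
  have h4 := Finset.card_add_card_compl (x ∪ y)
  rw [Finset.inter_comm y x] at h2
  rw [Fintype.card_fin] at h4
  omega

theorem case_rr (x y : FS) (hx : x.card = 7) (hy : y.card = 7) (hxy : x ≠ y) :
    ∃ z : FS, z.card = 7 ∧ z ≠ x ∧ z ≠ y ∧ 3 ≤ (x ∩ z).card ∧ 3 ≤ (y ∩ z).card := by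
  obtain ⟨cA, cB, cD⟩ := cards x y hx hy
  have ht : (x ∩ y).card ≠ 7 := by
    intro h
    have h1 := Finset.eq_of_subset_of_card_le (Finset.inter_subset_left : x ∩ y ⊆ x) (by omega)
    have h2 := Finset.eq_of_subset_of_card_le (Finset.inter_subset_right : x ∩ y ⊆ y) (by omega)
    exact hxy (h1.symm.trans h2)
  have key : ∃ a b c d : ℕ, a ≤ (x \ y).card ∧ b ≤ (y \ x).card ∧ c ≤ (x ∩ y).card ∧
      d ≤ (x ∪ y)ᶜ.card ∧ a + b + c + d = 7 ∧ 3 ≤ c + a ∧ 3 ≤ c + b ∧ c + a < 7 ∧ c + b < 7 := by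
    by_cases h : (x ∩ y).card ≤ 3
    · exact ⟨3, 4, 0, 0, by omega⟩
    · exact ⟨1, 1, 4, 1, by omega⟩
  obtain ⟨a, b, c, d, ha, hb, hc, hd, h1, h2, h3, h4, h5⟩ := key
  obtain ⟨A', hA, rfl⟩ := Finset.exists_subset_card_eq ha
  obtain ⟨B', hB, rfl⟩ := Finset.exists_subset_card_eq hb
  obtain ⟨C', hC, rfl⟩ := Finset.exists_subset_card_eq hc
  obtain ⟨D', hD, rfl⟩ := Finset.exists_subset_card_eq hd
  obtain ⟨z, hz, -, -, -, -, e1, e2⟩ := mk x y A' B' C' D' hA hB hC hD h1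
  refine ⟨z, hz, ?_, ?_, by omega, by omega⟩
  · rintro rfl; rw [Finset.inter_self] at e1; omega
  · rintro rfl; rw [Finset.inter_self] at e2; omega

theorem EE_ne {x z : FS} {i : Bool} (hx : x.card = 7) (h : EE x z i) : z ≠ x := by
  rintro rfl; have := EE_card h; rw [Finset.inter_self] at this; omega

theorem sub2 {p q : Fin 14} {S : FS} (hp : p ∈ S) (hq : q ∈ S) : ({p, q} : FS) ⊆ S := by
  intro u; simp only [Finset.mem_insert, Finset.mem_singleton]; rintro (rfl | rfl) <;> assumption

theorem sub1 {p : Fin 14} {S : FS} (hp : p ∈ S) : ({p} : FS) ⊆ S := by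
  simpa using hp

theorem case_br (x y : FS) (hx : x.card = 7) (hy : y.card = 7) (hxy : x ≠ y) (i : Bool) :
    ∃ z : FS, z.card = 7 ∧ z ≠ x ∧ z ≠ y ∧ EE x z i ∧ 3 ≤ (y ∩ z).card := by
  obtain ⟨cA, cB, cD⟩ := cards x y hx hy
  have ht : (x ∩ y).card ≠ 7 := by
    intro h
    have h1 := Finset.eq_of_subset_of_card_le (Finset.inter_subset_left : x ∩ y ⊆ x) (by omega)
    have h2 := Finset.eq_of_subset_of_card_le (Finset.inter_subset_right : x ∩ y ⊆ y) (by omega)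
    exact hxy (h1.symm.trans h2)
  by_cases h : (x ∩ y).card ≤ 3
  · obtain ⟨p, hp, q, hq, hpq, e⟩ := edge_in (x \ y) (by omega) i
    have key : ∃ b d : ℕ, b ≤ (y \ x).card ∧ d ≤ (x ∪ y)ᶜ.card ∧ b + d = 5 ∧ 3 ≤ b ∧ b < 7 := by
      by_cases h : (x ∩ y).card ≤ 2
      · exact ⟨5, 0, by omega⟩
      · exact ⟨4, 1, by omega⟩
    obtain ⟨b, d, hb, hd, h1, h2, h3⟩ := key
    obtain ⟨B', hB, rfl⟩ := Finset.exists_subset_card_eq hb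
    obtain ⟨D', hD, rfl⟩ := Finset.exists_subset_card_eq hd
    obtain ⟨z, hz, f, -, -, -, e1, e2⟩ := mk x y {p, q} B' ∅ D' (sub2 hp hq) hB (by simp) hD
      (by rw [Finset.card_pair hpq]; simp; omega)
    rw [Finset.card_empty] at e2
    have hE : EE x z i := Or.inl ⟨p, q, hpq, by rw [f]; simp, e⟩
    refine ⟨z, hz, EE_ne hx hE, ?_, hE, by omega⟩
    rintro rfl; rw [Finset.inter_self] at e2; omega
  · obtain ⟨p, hp, q, hq, hpq, e⟩ := edge_in (x ∩ y) (by omega) i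
    have key : ∃ b d : ℕ, b ≤ (y \ x).card ∧ d ≤ (x ∪ y)ᶜ.card ∧ b + d = 5 ∧ 1 ≤ b ∧ b < 5 := by
      by_cases h : (x ∩ y).card ≤ 4
      · exact ⟨3, 2, by omega⟩
      · exact ⟨1, 4, by omega⟩
    obtain ⟨b, d, hb, hd, h1, h2, h3⟩ := key
    obtain ⟨B', hB, rfl⟩ := Finset.exists_subset_card_eq hb
    obtain ⟨D', hD, rfl⟩ := Finset.exists_subset_card_eq hd
    obtain ⟨z, hz, f, -, -, -, e1, e2⟩ := mk x y ∅ B' {p, q} D' (by simp) hB (sub2 hp hq) hD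
      (by rw [Finset.card_pair hpq]; simp; omega)
    rw [Finset.card_pair hpq] at e2
    have hE : EE x z i := Or.inl ⟨p, q, hpq, by rw [f]; simp, e⟩
    refine ⟨z, hz, EE_ne hx hE, ?_, hE, by omega⟩
    rintro rfl; rw [Finset.inter_self] at e2; omega

def TT (x y : FS) (i j : Bool) : Prop := ∃ z : FS, z.card = 7 ∧ EE x z i ∧ EE y z j

theorem TT_symm {x y : FS} {i j : Bool} (h : TT x y i j) : TT y x j i := by
  obtain ⟨z, a, b, c⟩ := h; exact ⟨z, a, c, b⟩

theorem card_sdiff' {S T : FS} (h : T ⊆ S) : (S \ T).card + T.card = S.card :=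
  Finset.card_sdiff_add_card_eq_card h

/-- two from A, two from B -/
theorem o4 (x y : FS) (i j : Bool) (a a' b b' : Fin 14) (ha : a ∈ x \ y) (ha' : a' ∈ x \ y)
    (hb : b ∈ y \ x) (hb' : b' ∈ y \ x) (haa : a ≠ a') (hbb : b ≠ b') (e : gg a a' = i) (f : gg b b' = j)
    (hD : 3 ≤ (x ∪ y)ᶜ.card) : TT x y i j := by
  obtain ⟨D', hD, hd⟩ := Finset.exists_subset_card_eq hD
  obtain ⟨z, hz, f1, f2, -, -, -, -⟩ := mk x y {a, a'} {b, b'} ∅ D' (sub2 ha ha') (sub2 hb hb') (by simp) hD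
      (by rw [Finset.card_pair haa, Finset.card_pair hbb, hd]; simp)
  exact ⟨z, hz, Or.inl ⟨a, a', haa, by rw [f1]; simp, e⟩, Or.inl ⟨b, b', hbb, by rw [f2]; simp, f⟩⟩

theorem ne_of {x y : FS} {a p : Fin 14} (ha : a ∈ x \ y) (hp : p ∈ y) : p ≠ a := by
  rintro rfl; simp_all

/-- one from each of A, B, C -/
theorem o3 (x y : FS) (i j : Bool) (p a b : Fin 14) (hp : p ∈ x ∩ y) (ha : a ∈ x \ y)
    (hb : b ∈ y \ x) (e : gg p a = i) (f : gg p b = j)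
    (hD : 4 ≤ (x ∪ y)ᶜ.card) : TT x y i j := by
  obtain ⟨D', hD, hd⟩ := Finset.exists_subset_card_eq hD
  obtain ⟨z, hz, f1, f2, -, -, -, -⟩ := mk x y {a} {b} {p} D' (sub1 ha) (sub1 hb) (sub1 hp) hD
      (by rw [hd]; simp)
  simp only [Finset.mem_inter] at hp
  exact ⟨z, hz, Or.inl ⟨p, a, ne_of ha hp.2, by rw [f1]; rfl, e⟩,
    Or.inl ⟨p, b, ne_of hb hp.1, by rw [f2]; rfl, f⟩⟩

/-- two from C -/
theorem o0 (x y : FS) (i : Bool) (hC : 4 ≤ (x ∩ y).card) (hD : 5 ≤ (x ∪ y)ᶜ.card) : TT x y i i := by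
  obtain ⟨p, hp, q, hq, hpq, e⟩ := edge_in (x ∩ y) hC i
  obtain ⟨D', hD, hd⟩ := Finset.exists_subset_card_eq hD
  obtain ⟨z, hz, f1, f2, -, -, -, -⟩ := mk x y ∅ ∅ {p, q} D' (by simp) (by simp) (sub2 hp hq) hD
      (by rw [Finset.card_pair hpq, hd]; simp)
  exact ⟨z, hz, Or.inl ⟨p, q, hpq, by rw [f1]; simp, e⟩, Or.inl ⟨p, q, hpq, by rw [f2]; simp, e⟩⟩

theorem t3 (x y : FS) (hx : x.card = 7) (hy : y.card = 7) (ht : (x ∩ y).card = 3) (i j : Bool) :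
    TT x y i j := by
  obtain ⟨cA, cB, cD⟩ := cards x y hx hy
  obtain ⟨a, ha, a', ha', haa, e⟩ := edge_in (x \ y) (by omega) i
  obtain ⟨b, hb, b', hb', hbb, f⟩ := edge_in (y \ x) (by omega) j
  exact o4 x y i j a a' b b' ha ha' hb hb' haa hbb e f (by omega)

theorem sdiff_one {S T : FS} (h : T ⊆ S) (hc : S.card = T.card + 1) : ∃ u ∈ S, u ∉ T ∧ S \ T = {u} := by
  have := card_sdiff' h
  obtain ⟨u, hu⟩ := Finset.card_eq_one.1 (show (S \ T).card = 1 by omega)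
  have : u ∈ S \ T := by rw [hu]; simp
  simp only [Finset.mem_sdiff] at this
  exact ⟨u, this.1, this.2, hu⟩

theorem t4a (x y : FS) (hx : x.card = 7) (hy : y.card = 7) (ht : (x ∩ y).card = 4) (i j : Bool)
    (hA : ∃ a ∈ x \ y, ∃ b ∈ x \ y, a ≠ b ∧ gg a b = i)
    (hB : ¬ ∃ a ∈ y \ x, ∃ b ∈ y \ x, a ≠ b ∧ gg a b = j) : TT x y i j := by
  obtain ⟨cA, cB, cD⟩ := cards x y hx hy
  obtain ⟨a, ha, a', ha', haa, e⟩ := hA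
  obtain ⟨u, hu, -, hS⟩ := sdiff_one (sub2 ha ha') (by rw [Finset.card_pair haa]; omega)
  obtain ⟨b, hb, f⟩ := edge_to (y \ x) (by omega) j u (by simp at hu ⊢; tauto) hB
  obtain ⟨z, hz, f1, f2, -, f4, -, -⟩ := mk x y {a, a'} {b} ∅ (x ∪ y)ᶜ (sub2 ha ha') (sub1 hb) (by simp)
    (Finset.Subset.refl _) (by rw [Finset.card_pair haa, cD, ht]; simp)
  exact ⟨z, hz, Or.inl ⟨a, a', haa, by rw [f1]; simp, e⟩,
    Or.inr ⟨b, u, by rw [f2]; simp, by rw [f4, hS]; simp, by rw [gg_symm]; exact f⟩⟩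

theorem t4 (x y : FS) (hx : x.card = 7) (hy : y.card = 7) (ht : (x ∩ y).card = 4) (i j : Bool) :
    TT x y i j := by
  obtain ⟨cA, cB, cD⟩ := cards x y hx hy
  by_cases hA : ∃ a ∈ x \ y, ∃ b ∈ x \ y, a ≠ b ∧ gg a b = i <;>
    by_cases hB : ∃ a ∈ y \ x, ∃ b ∈ y \ x, a ≠ b ∧ gg a b = j
  · obtain ⟨a, ha, a', ha', haa, e⟩ := hA
    obtain ⟨b, hb, b', hb', hbb, f⟩ := hB
    exact o4 x y i j a a' b b' ha ha' hb hb' haa hbb e f (by omega)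
  · exact t4a x y hx hy ht i j hA hB
  · exact TT_symm (t4a y x hy hx (by rwa [Finset.inter_comm]) j i hB hA)
  · obtain ⟨p, hp⟩ := Finset.card_pos.1 (show 0 < (x ∩ y).card by omega)
    have hp' := hp
    simp only [Finset.mem_inter] at hp'
    obtain ⟨a, ha, e⟩ := edge_to (x \ y) (by omega) i p (by simp; tauto) hA
    obtain ⟨b, hb, f⟩ := edge_to (y \ x) (by omega) j p (by simp; tauto) hB
    exact o3 x y i j p a b hp ha hb e f (by omega)

theorem t6 (x y : FS) (hx : x.card = 7) (hy : y.card = 7) (ht : (x ∩ y).card = 6) (i j : Bool) :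
    TT x y i j := by
  obtain ⟨cA, cB, cD⟩ := cards x y hx hy
  by_cases hij : i = j
  · subst hij; exact o0 x y i (by omega) (by omega)
  obtain ⟨a, hA⟩ := Finset.card_eq_one.1 (show (x \ y).card = 1 by omega)
  obtain ⟨b, hB⟩ := Finset.card_eq_one.1 (show (y \ x).card = 1 by omega)
  have ha : a ∈ x \ y := by rw [hA]; simp
  have hb : b ∈ y \ x := by rw [hB]; simp
  have hab : a ≠ b := by rintro rfl; simp at ha hb; tauto
  have : ∃ p, p ≠ a ∧ p ≠ b ∧ gg p a = i ∧ gg p b = j := by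
    cases i <;> cases j
    · exact absurd rfl hij
    · obtain ⟨p, h1, h2, h3, h4⟩ := gg_dist b a hab.symm
      exact ⟨p, h2, h1, h4, h3⟩
    · exact gg_dist a b hab
    · exact absurd rfl hij
  obtain ⟨p, hpa, hpb, e, f⟩ := this
  by_cases hp : p ∈ x ∩ y
  · exact o3 x y i j p a b hp ha hb e f (by omega)
  have hpA : p ∉ x \ y := by rw [hA]; simpa
  have hpB : p ∉ y \ x := by rw [hB]; simpa
  have hpD : p ∈ (x ∪ y)ᶜ := by
    simp only [Finset.mem_inter, Finset.mem_sdiff, Finset.mem_compl, Finset.mem_union] at *; tauto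
  have hD : (x ∪ y)ᶜ \ ((x ∪ y)ᶜ \ {p}) = {p} := Finset.sdiff_sdiff_eq_self (sub1 hpD)
  have hc := card_sdiff' (sub1 hpD)
  rw [Finset.card_singleton] at hc
  obtain ⟨z, hz, f1, f2, f3, f4, -, -⟩ := mk x y {a} {b} ∅ ((x ∪ y)ᶜ \ {p}) (sub1 ha) (sub1 hb) (by simp)
    Finset.sdiff_subset (by simp only [Finset.card_singleton, Finset.card_empty]; omega)
  exact ⟨z, hz, Or.inr ⟨a, p, by rw [f1]; simp, by rw [f3, hD, hB]; simp, by rw [gg_symm]; exact e⟩,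
    Or.inr ⟨b, p, by rw [f2]; simp, by rw [f4, hD, hA]; simp, by rw [gg_symm]; exact f⟩⟩

/-- one from C, one from A, all D -/
theorem o1 (x y : FS) (i j : Bool) (p a a' : Fin 14) (hp : p ∈ x ∩ y) (hA : x \ y = {a, a'}) (haa : a ≠ a')
    (e : gg p a = i) (f : gg p a' = j) (hD : (x ∪ y)ᶜ.card = 5) : TT x y i j := by
  have ha : a ∈ x \ y := by rw [hA]; simp
  obtain ⟨z, hz, f1, f2, f3, f4, -, -⟩ := mk x y {a} ∅ {p} (x ∪ y)ᶜ (sub1 ha) (by simp) (sub1 hp)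
    (Finset.Subset.refl _) (by rw [hD]; simp)
  simp only [Finset.mem_inter] at hp
  refine ⟨z, hz, Or.inl ⟨p, a, ne_of ha hp.2, by rw [f1]; rfl, e⟩,
    Or.inr ⟨p, a', by rw [f2]; simp, ?_, f⟩⟩
  rw [f4, hA]; ext u; simp; grind

/-- all A, one from B, D minus a point -/
theorem o5 (x y : FS) (i j : Bool) (a a' b d : Fin 14) (hA : x \ y = {a, a'}) (haa : a ≠ a')
    (hb : b ∈ y \ x) (hd : d ∈ (x ∪ y)ᶜ)
    (e : gg a a' = i) (f : gg b d = j) (hD : (x ∪ y)ᶜ.card = 5) : TT x y i j := by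
  have hDD : (x ∪ y)ᶜ \ ((x ∪ y)ᶜ \ {d}) = {d} := Finset.sdiff_sdiff_eq_self (sub1 hd)
  have hc := card_sdiff' (sub1 hd)
  rw [Finset.card_singleton] at hc
  obtain ⟨z, hz, f1, f2, f3, f4, -, -⟩ := mk x y (x \ y) {b} ∅ ((x ∪ y)ᶜ \ {d}) (Finset.Subset.refl _)
    (sub1 hb) (by simp) Finset.sdiff_subset
    (by rw [hA, Finset.card_pair haa]; simp only [Finset.card_singleton, Finset.card_empty]; omega)
  exact ⟨z, hz, Or.inl ⟨a, a', haa, by rw [f1, hA]; simp, e⟩,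
    Or.inr ⟨b, d, by rw [f2]; simp, by rw [f4, hDD]; simp, f⟩⟩

theorem o7 (x y : FS) (i j : Bool) (a a' b b' : Fin 14) (hA : x \ y = {a, a'}) (haa : a ≠ a')
    (hB : y \ x = {b, b'}) (hbb : b ≠ b')
    (e : gg a b' = i) (f : gg a' b = j) (hD : (x ∪ y)ᶜ.card = 5) : TT x y i j := by
  have ha : a ∈ x \ y := by rw [hA]; simp
  have hb : b ∈ y \ x := by rw [hB]; simp
  obtain ⟨z, hz, f1, f2, f3, f4, -, -⟩ := mk x y {a} {b} ∅ (x ∪ y)ᶜ (sub1 ha) (sub1 hb) (by simp)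
    (Finset.Subset.refl _) (by rw [hD]; simp)
  refine ⟨z, hz, Or.inr ⟨a, b', by rw [f1]; simp, ?_, e⟩,
    Or.inr ⟨b, a', by rw [f2]; simp, ?_, by rw [gg_symm]; exact f⟩⟩
  · rw [f3, hB]; ext u; simp; grind
  · rw [f4, hA]; ext u; simp; grind

/-- if `aa'` and `bb'` both have color `i`, target `(i, j)` with `i ≠ j`. -/
theorem t5a (x y : FS) (i j : Bool) (hij : i ≠ j) (a a' b b' : Fin 14) (hA : x \ y = {a, a'}) (haa : a ≠ a')
    (hB : y \ x = {b, b'}) (hbb : b ≠ b') (e : gg a a' = i) (f : gg b b' = i)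
    (hD : (x ∪ y)ᶜ.card = 5) : TT x y i j := by
  have hb : b ∈ y \ x := by rw [hB]; simp
  have hb' : b' ∈ y \ x := by rw [hB]; simp
  by_contra hT
  have hall : ∀ u ∈ y \ x, ∀ d ∈ (x ∪ y)ᶜ, gg u d = i := by
    intro u hu d hd
    by_contra hne
    exact hT (o5 x y i j a a' u d hA haa hu hd e (by revert hne hij; cases gg u d <;> cases i <;> cases j <;> simp) hD)
  obtain ⟨p, hp, q, hq, hpq, k⟩ := edge_in (x ∪ y)ᶜ (by omega) i
  have hne : ∀ u ∈ y \ x, ∀ d ∈ (x ∪ y)ᶜ, u ≠ d := by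
    rintro u hu _ hd rfl
    simp only [Finset.mem_sdiff, Finset.mem_compl, Finset.mem_union] at *; tauto
  exact gg_K4 b b' hbb p (hne _ hb _ hp) (hne _ hb' _ hp) (by rw [f, hall _ hb _ hp]) (by rw [f, hall _ hb' _ hp])
    q (hne _ hb _ hq) (hne _ hb' _ hq) hpq (by rw [f, hall _ hb _ hq]) (by rw [f, hall _ hb' _ hq]) (by rw [f, k])

theorem card_two_lt {S : FS} (h : S.card = 2) : ∃ a a', a < a' ∧ S = {a, a'} := by
  obtain ⟨a, a', haa, hA⟩ := Finset.card_eq_two.1 h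
  rcases lt_or_gt_of_ne haa with h | h
  · exact ⟨a, a', h, hA⟩
  · exact ⟨a', a, h, by rw [hA, Finset.pair_comm]⟩

theorem t5 (x y : FS) (hx : x.card = 7) (hy : y.card = 7) (ht : (x ∩ y).card = 5) (i j : Bool) :
    TT x y i j := by
  obtain ⟨cA, cB, cD⟩ := cards x y hx hy
  rw [ht] at cD
  have cD' : (y ∪ x)ᶜ.card = 5 := by rwa [Finset.union_comm]
  by_cases hij : i = j
  · subst hij; exact o0 x y i (by omega) (by omega)
  obtain ⟨a, a', laa, hA⟩ := card_two_lt (show (x \ y).card = 2 by omega)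
  have haa := ne_of_lt laa
  obtain ⟨b, b', lbb, hB⟩ := card_two_lt (show (y \ x).card = 2 by omega)
  have hbb := ne_of_lt lbb
  have hA' : x \ y = {a', a} := by rw [hA, Finset.pair_comm]
  have hB' : y \ x = {b', b} := by rw [hB, Finset.pair_comm]
  have ha : a ∈ x \ y := by rw [hA]; simp
  have ha' : a' ∈ x \ y := by rw [hA]; simp
  have hb : b ∈ y \ x := by rw [hB]; simp
  have hb' : b' ∈ y \ x := by rw [hB]; simp
  have dich : ∀ u : Bool, u = i ∨ u = j := by
    intro u; revert hij; cases u <;> cases i <;> cases j <;> simp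
  rcases dich (gg a a') with e | e <;> rcases dich (gg b b') with f | f
  · exact t5a x y i j hij a a' b b' hA haa hB hbb e f cD
  · exact o4 x y i j a a' b b' ha ha' hb hb' haa hbb e f (by omega)
  swap
  · exact TT_symm (t5a y x j i (Ne.symm hij) b b' a a' hB hbb hA haa f e cD')
  by_contra hT
  have h1 : gg a b = gg a' b' := by
    rcases dich (gg a b) with k | k <;> rcases dich (gg a' b') with l | l
    · rw [k, l]
    · exact absurd (o7 x y i j a a' b' b hA haa hB' hbb.symm k l cD) hT
    · exact absurd (o7 x y i j a' a b b' hA' haa.symm hB hbb l k cD) hT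
    · rw [k, l]
  have h2 : gg a b' = gg a' b := by
    rcases dich (gg a b') with k | k <;> rcases dich (gg a' b) with l | l
    · rw [k, l]
    · exact absurd (o7 x y i j a a' b b' hA haa hB hbb k l cD) hT
    · exact absurd (o7 x y i j a' a b' b hA' haa.symm hB' hbb.symm l k cD) hT
    · rw [k, l]
  have hcnt := gg_cnt a a' laa b b' lbb (by rw [e, f]; exact Ne.symm hij) h1 h2
  have hsub : x ∩ y ⊆ Finset.univ.filter (fun p => p ≠ a ∧ p ≠ a' ∧ p ≠ b ∧ p ≠ b' ∧ gg p a = gg p a' ∧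
      gg p b = gg p b' ∧ ¬ (gg p a = gg b b' ∧ gg p b = gg a a')) := by
    intro p hp
    have hp' := hp
    simp only [Finset.mem_inter] at hp'
    have hpy : p ∈ y ∩ x := by rwa [Finset.inter_comm]
    simp only [Finset.mem_filter, Finset.mem_univ, true_and]
    refine ⟨ne_of ha hp'.2, ne_of ha' hp'.2, ne_of hb hp'.1, ne_of hb' hp'.1, ?_, ?_, ?_⟩
    · rcases dich (gg p a) with k | k <;> rcases dich (gg p a') with l | l
      · rw [k, l]
      · exact absurd (o1 x y i j p a a' hp hA haa k l cD) hT
      · exact absurd (o1 x y i j p a' a hp hA' haa.symm l k cD) hT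
      · rw [k, l]
    · rcases dich (gg p b) with k | k <;> rcases dich (gg p b') with l | l
      · rw [k, l]
      · exact absurd (TT_symm (o1 y x j i p b' b hpy hB' hbb.symm l k cD')) hT
      · exact absurd (TT_symm (o1 y x j i p b b' hpy hB hbb k l cD')) hT
      · rw [k, l]
    · rintro ⟨k, l⟩
      exact hT (o3 x y i j p a b hp ha hb (k.trans f) (l.trans e) (by omega))
  have := Finset.card_le_card hsub
  omega

theorem case_bb (x y : FS) (hx : x.card = 7) (hy : y.card = 7) (hxy : x ≠ y) (h3 : 3 ≤ (x ∩ y).card)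
    (i j : Bool) : TT x y i j := by
  obtain ⟨cA, cB, cD⟩ := cards x y hx hy
  have ht : (x ∩ y).card ≠ 7 := by
    intro h
    have h1 := Finset.eq_of_subset_of_card_le (Finset.inter_subset_left : x ∩ y ⊆ x) (by omega)
    have h2 := Finset.eq_of_subset_of_card_le (Finset.inter_subset_right : x ∩ y ⊆ y) (by omega)
    exact hxy (h1.symm.trans h2)
  have : (x ∩ y).card = 3 ∨ (x ∩ y).card = 4 ∨ (x ∩ y).card = 5 ∨ (x ∩ y).card = 6 := by omega
  rcases this with h | h | h | h
  · exact t3 x y hx hy h i j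
  · exact t4 x y hx hy h i j
  · exact t5 x y hx hy h i j
  · exact t6 x y hx hy h i j

abbrev VV := {s : FS // s.card = 7}

theorem color_cases (k : Color) : k = Color.r ∨ ∃ i, k = bl i := by
  cases k
  · exact Or.inl rfl
  · exact Or.inr ⟨true, rfl⟩
  · exact Or.inr ⟨false, rfl⟩

theorem good_cond1 (x y : VV) (hxy : x ≠ y) (j k : Color) (h : M2 (col x.1 y.1, j, k)) :
    ∃ z : VV, z ≠ x ∧ z ≠ y ∧ col y.1 z.1 = j ∧ col x.1 z.1 = k := by
  have hne : x.1 ≠ y.1 := fun h => hxy (Subtype.ext h)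
  rcases color_cases j with rfl | ⟨j, rfl⟩ <;> rcases color_cases k with rfl | ⟨k, rfl⟩
  · obtain ⟨z, hz, h1, h2, h3, h4⟩ := case_rr x.1 y.1 x.2 y.2 hne
    exact ⟨⟨z, hz⟩, fun h => h1 (congrArg Subtype.val h), fun h => h2 (congrArg Subtype.val h),
      col_r.2 h4, col_r.2 h3⟩
  · obtain ⟨z, hz, h1, h2, h3, h4⟩ := case_br x.1 y.1 x.2 y.2 hne k
    exact ⟨⟨z, hz⟩, fun h => h1 (congrArg Subtype.val h), fun h => h2 (congrArg Subtype.val h),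
      col_r.2 h4, col_EE h3⟩
  · obtain ⟨z, hz, h1, h2, h3, h4⟩ := case_br y.1 x.1 y.2 x.2 hne.symm j
    exact ⟨⟨z, hz⟩, fun h => h2 (congrArg Subtype.val h), fun h => h1 (congrArg Subtype.val h),
      col_EE h3, col_r.2 h4⟩
  · have h3 : 3 ≤ (x.1 ∩ y.1).card := by
      rw [← col_r]
      rcases color_cases (col x.1 y.1) with h' | ⟨i, h'⟩
      · exact h'
      · exfalso; rw [h'] at h; revert h; cases i <;> cases j <;> cases k <;> simp [M2, bl]
    obtain ⟨z, hz, h1, h2⟩ := case_bb x.1 y.1 x.2 y.2 hne h3 k j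
    exact ⟨⟨z, hz⟩, fun h => EE_ne x.2 h1 (congrArg Subtype.val h),
      fun h => EE_ne y.2 h2 (congrArg Subtype.val h), col_EE h2, col_EE h1⟩

theorem M2_of_r {a b c : Color} (h : a = Color.r ∨ b = Color.r ∨ c = Color.r) : M2 (a, b, c) := by
  unfold M2; rcases h with rfl | rfl | rfl <;> simp

theorem good_cond2 (x y z : VV) : M2 (col x.1 y.1, col y.1 z.1, col x.1 z.1) := by
  apply M2_of_r
  simp only [col_r]
  have h1 := Finset.card_union_add_card_inter x.1 y.1
  have h2 := Finset.card_union_add_card_inter (x.1 ∪ y.1) z.1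
  have h3 := Finset.card_le_univ ((x.1 ∪ y.1) ∪ z.1)
  rw [Finset.union_inter_distrib_right] at h2
  have h4 := Finset.card_union_le (x.1 ∩ z.1) (y.1 ∩ z.1)
  rw [x.2, y.2] at h1
  rw [z.2] at h2
  rw [Fintype.card_fin] at h3
  omega

theorem good_VV : Good (fun x y : VV => col x.1 y.1) := by
  refine ⟨fun x y _ => col_symm _ _, fun x y hxy j k h => good_cond1 x y hxy j k h,
    fun x y z _ _ _ => good_cond2 x y z, ?_⟩
  intro x l
  have hc : (x.1ᶜ).card = 7 := by rw [Finset.card_compl, x.2]; rfl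
  have hne : x ≠ ⟨x.1ᶜ, hc⟩ := by
    intro h
    have h' : x.1 = x.1ᶜ := congrArg Subtype.val h
    have := x.2
    obtain ⟨p, hp⟩ := Finset.card_pos.1 (show 0 < x.1.card by omega)
    have hp' := hp
    rw [h', Finset.mem_compl] at hp'
    exact hp' hp
  obtain ⟨z, h1, _, _, h4⟩ := good_cond1 x ⟨x.1ᶜ, hc⟩ hne Color.r l (M2_of_r (by simp))
  exact ⟨z, h1, h4⟩

theorem good_transport {V W : Type*} (e : W ≃ V) (c : V → V → Color) (h : Good c) :
    Good (fun x y : W => c (e x) (e y)) := by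
  obtain ⟨h1, h2, h3, h4⟩ := h
  have ne : ∀ {x y : W}, x ≠ y → e x ≠ e y := fun h => e.injective.ne h
  refine ⟨fun x y h => h1 _ _ (ne h), ?_, fun x y z a b c => h3 _ _ _ (ne a) (ne b) (ne c), ?_⟩
  · intro x y hxy j k hm
    obtain ⟨z, a, b, c, d⟩ := h2 _ _ (ne hxy) j k hm
    refine ⟨e.symm z, ?_, ?_, by simpa using c, by simpa using d⟩
    · rintro rfl; simp at a
    · rintro rfl; simp at b
  · intro x l
    obtain ⟨y, a, b⟩ := h4 (e x) l
    refine ⟨e.symm y, ?_, by simpa using b⟩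
    rintro rfl; simp at a

theorem card_VV : Fintype.card VV = 3432 := by
  rw [Fintype.card_finset_len, Fintype.card_fin]; decide +kernel

theorem exists_good : ∃ c : Fin 3432 → Fin 3432 → Color, Good c :=
  ⟨_, good_transport (Fintype.equivFinOfCardEq card_VV).symm _ good_VV⟩

/-- There is an edge-coloring of `K_N` for `N = 3432 = C(14,7)` that is good with respect to
`M₂`; consequently `f(2) = min {N : M₂ is realizable on K_N} ≤ 3432`. -/
theorem realization_of_M2_on_3432 :
    (3432 = Nat.choose 14 7) ∧
    (∃ c : Fin 3432 → Fin 3432 → Color, Good c) ∧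
    sInf {N : ℕ | ∃ c : Fin N → Fin N → Color, Good c} ≤ 3432 := by
  exact ⟨by decide +kernel, exists_good, Nat.sInf_le exists_good⟩
end

section
/- Let V be a set, L a finite set of colors, M ⊆ L³, and c a symmetric edge-coloring of the complete graph on V satisfying conditions (i) and (ii) with respect to M. For α ∈ L set R_α = {(x,y) ∈ V × V : x ≠ y and c(xy) = α}, and for binary relations let R ∘ S = {(x,z) : ∃ y, (x,y) ∈ R and (y,z) ∈ S}. Then for all α, β, γ ∈ L: if (R_α ∘ R_β) ∩ R_γ is nonempty, then R_γ ⊆ R_α ∘ R_β. -/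
/-- The binary relation `R_α = {(x,y) : x ≠ y and c(xy) = α}` determined by a color `α`. -/
def colorRel {V L : Type*} (c : V → V → L) (α : L) : Set (V × V) :=
  {p | p.1 ≠ p.2 ∧ c p.1 p.2 = α}

/-- Composition of binary relations: `R ∘ S = {(x,z) : ∃ y, (x,y) ∈ R ∧ (y,z) ∈ S}`. -/
def relComp {V : Type*} (R S : Set (V × V)) : Set (V × V) :=
  {p | ∃ y, (p.1, y) ∈ R ∧ (y, p.2) ∈ S}

/-- If a symmetric edge-coloring `c : V × V → L` satisfies conditions (i) and (ii) with
respect to `M ⊆ L³`, then for all colors `α, β, γ`: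
`(R_α ∘ R_β) ∩ R_γ ≠ ∅  →  R_γ ⊆ R_α ∘ R_β`. -/
theorem atoms_of_good_coloring {V L : Type*} [Fintype L] (M : Set (L × L × L))
    (c : V → V → L)
    (hsym : ∀ x y : V, x ≠ y → c x y = c y x)
    -- condition (i): c(xyz) = (c(xy), c(yz), c(xz)) = (c(xy), j, k) for some z
    (hi : ∀ x y : V, x ≠ y → ∀ j k : L, (c x y, j, k) ∈ M →
      ∃ z : V, z ≠ x ∧ z ≠ y ∧ c y z = j ∧ c x z = k)
    -- condition (ii)
    (hii : ∀ x y z : V, x ≠ y → y ≠ z → x ≠ z → (c x y, c y z, c x z) ∈ M) :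
    ∀ α β γ : L,
      (relComp (colorRel c α) (colorRel c β) ∩ colorRel c γ).Nonempty →
      colorRel c γ ⊆ relComp (colorRel c α) (colorRel c β) := by
  rintro α β γ ⟨⟨x, z⟩, ⟨y, ⟨hxy, h1⟩, ⟨hyz, h2⟩⟩, ⟨hxz, h3⟩⟩ ⟨u, v⟩ ⟨huv, h4⟩
  dsimp only at hxy h1 hyz h2 hxz h3 huv h4
  have hM := hii x z y hxz hyz.symm hxy
  rw [h3, ← h4] at hM
  obtain ⟨w, hwu, hwv, h5, h6⟩ := hi u v huv _ _ hM
  refine ⟨w, ⟨hwu.symm, h6.trans h1⟩, ⟨hwv, ?_⟩⟩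
  show c w v = β
  rw [hsym w v hwv, h5, hsym z y hyz.symm, h2]
end

section
/- For every splitting coloring s (no further hypotheses on s are needed), the induced coloring c on 7-element subsets of P contains no all-blue triangle: there do not exist pairwise distinct 7-element subsets X, Y, Z of P such that c(XY), c(YZ), c(XZ) all lie in {b₀, b₁}. Equivalently, c satisfies condition (ii) with respect to M₂: for all pairwise distinct X, Y, Z, the triple (c(XY), c(YZ), c(XZ)) belongs to M₂ = {r,b₀,b₁}³ \ {b₀,b₁}³. -/
/-- For every splitting coloring `s` of the 14-point set, the induced coloring `c` on
7-element subsets has no all-blue triangle, i.e. it satisfies condition (ii) with respect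
to `M₂`. -/
theorem induced_coloring_no_blue_triangle
    -- `s` is a splitting coloring: symmetric with values in {b₀, b₁}
    (s : Fin 14 → Fin 14 → Color)
    (hssym : ∀ i j : Fin 14, i ≠ j → s i j = s j i)
    (hsblue : ∀ i j : Fin 14, i ≠ j → s i j = Color.b0 ∨ s i j = Color.b1)
    -- `c` is the coloring on 7-element subsets induced by `s`
    (c : Finset (Fin 14) → Finset (Fin 14) → Color)
    (hc0 : ∀ X Y : Finset (Fin 14), X.card = 7 → Y.card = 7 →
      (X ∩ Y).card = 0 → c X Y = Color.b0)
    (hc1 : ∀ X Y : Finset (Fin 14), X.card = 7 → Y.card = 7 →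
      (X ∩ Y).card = 1 → c X Y = Color.b1)
    (hc2 : ∀ X Y : Finset (Fin 14), X.card = 7 → Y.card = 7 → ∀ i j : Fin 14, i ≠ j →
      X ∩ Y = {i, j} → c X Y = s i j)
    (hcr : ∀ X Y : Finset (Fin 14), X.card = 7 → Y.card = 7 → X ≠ Y →
      3 ≤ (X ∩ Y).card → c X Y = Color.r) :
    ∀ X Y Z : Finset (Fin 14), X.card = 7 → Y.card = 7 → Z.card = 7 →
      X ≠ Y → Y ≠ Z → X ≠ Z → M2 (c X Y, c Y Z, c X Z) := by
  intro X Y Z hX hY hZ hXY hYZ hXZ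
  have key : ∀ A B : Finset (Fin 14), A.card = 7 → B.card = 7 → A ≠ B →
      (c A B = Color.b0 ∨ c A B = Color.b1) → (A ∩ B).card ≤ 2 := by
    intro A B hA hB hAB h
    by_contra hlt
    have hr := hcr A B hA hB hAB (by omega)
    rw [hr] at h
    rcases h with h | h <;> cases h
  rintro ⟨h1, h2, h3⟩
  have k1 := key X Y hX hY hXY h1
  have k2 := key Y Z hY hZ hYZ h2
  have k3 := key X Z hX hZ hXZ h3
  have e1 := Finset.card_union_add_card_inter X Y
  have e2 := Finset.card_union_add_card_inter (X ∪ Y) Z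
  have e3 : ((X ∪ Y) ∩ Z).card ≤ (X ∩ Z).card + (Y ∩ Z).card := by
    rw [Finset.union_inter_distrib_right]
    exact Finset.card_union_le _ _
  have e4 : ((X ∪ Y) ∪ Z).card ≤ 14 := by
    simpa using Finset.card_le_univ ((X ∪ Y) ∪ Z)
  omega
end

section
/- The cyclic 2-coloring of K₁₇ determined by C₀ and C₁ has no monochromatic K₄: there do not exist four pairwise distinct elements of ZMod 17 all of whose pairwise differences lie in C₀, and there do not exist four pairwise distinct elements of ZMod 17 all of whose pairwise differences lie in C₁. -/
/-- The `b₀` color class of the cyclic coloring of `K₁₇`: the difference set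
`{1,2,4,8,9,13,15,16} ⊆ ZMod 17`. -/
def C0 : Finset (ZMod 17) := {1, 2, 4, 8, 9, 13, 15, 16}

/-- The `b₁` color class of the cyclic coloring of `K₁₇`: the difference set
`{3,5,6,7,10,11,12,14} ⊆ ZMod 17`. -/
def C1 : Finset (ZMod 17) := {3, 5, 6, 7, 10, 11, 12, 14}

lemma aux_C0 : ∀ a ∈ C0, ∀ b ∈ C0, a - b ∈ C0 → ∀ c ∈ C0, a - c ∈ C0 → b - c ∉ C0 := by
  decide +kernel

lemma aux_C1 : ∀ a ∈ C1, ∀ b ∈ C1, a - b ∈ C1 → ∀ c ∈ C1, a - c ∈ C1 → b - c ∉ C1 := by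
  decide +kernel

lemma aux_gen (C : Finset (ZMod 17))
    (hC : ∀ a ∈ C, ∀ b ∈ C, a - b ∈ C → ∀ c ∈ C, a - c ∈ C → b - c ∉ C) :
    ¬ ∃ A : Finset (ZMod 17), A.card = 4 ∧ ∀ x ∈ A, ∀ y ∈ A, x ≠ y → x - y ∈ C := by
  rintro ⟨A, hA, h⟩
  obtain ⟨x, y, z, w, hxy, hxz, hxw, hyz, hyw, hzw, rfl⟩ := Finset.card_eq_four.mp hA
  refine hC (x - w) (h x (by simp) w (by simp) hxw) (y - w) (h y (by simp) w (by simp) hyw) ?_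
    (z - w) (h z (by simp) w (by simp) hzw) ?_ ?_
  · rw [sub_sub_sub_cancel_right]; exact h x (by simp) y (by simp) hxy
  · rw [sub_sub_sub_cancel_right]; exact h x (by simp) z (by simp) hxz
  · rw [sub_sub_sub_cancel_right]; exact h y (by simp) z (by simp) hyz

/-- The cyclic 2-coloring of `K₁₇` determined by `C₀` and `C₁` has no monochromatic `K₄`:
there is no set of four pairwise distinct elements of `ZMod 17` all of whose pairwise
differences lie in `C₀`, and likewise for `C₁`. -/
theorem cyclic_coloring_no_mono_K4 :
    (¬ ∃ A : Finset (ZMod 17), A.card = 4 ∧ ∀ x ∈ A, ∀ y ∈ A, x ≠ y → x - y ∈ C0) ∧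
    (¬ ∃ A : Finset (ZMod 17), A.card = 4 ∧ ∀ x ∈ A, ∀ y ∈ A, x ≠ y → x - y ∈ C1) := by
  exact ⟨aux_gen C0 aux_C0, aux_gen C1 aux_C1⟩
end

section
/- The cyclic 2-coloring of K₁₇ determined by C₀ and C₁ has no monochromatic K_{4,3}: there do not exist disjoint subsets A, B of ZMod 17 with |A| = 4 and |B| = 3 such that a − b ∈ C₀ for every a ∈ A and b ∈ B, and likewise there are no such A, B with a − b ∈ C₁ for every a ∈ A and b ∈ B. -/
theorem aux_C0_s6 : ∀ d e : ZMod 17, d ≠ 0 → e ≠ 0 → d ≠ e →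
    (C0.filter (fun t => t + d ∈ C0 ∧ t + e ∈ C0)).card ≤ 3 := by
  decide +kernel

theorem aux_C1_s6 : ∀ d e : ZMod 17, d ≠ 0 → e ≠ 0 → d ≠ e →
    (C1.filter (fun t => t + d ∈ C1 ∧ t + e ∈ C1)).card ≤ 3 := by
  decide +kernel

theorem aux_gen_s6 (C : Finset (ZMod 17))
    (h : ∀ d e : ZMod 17, d ≠ 0 → e ≠ 0 → d ≠ e →
      (C.filter (fun t => t + d ∈ C ∧ t + e ∈ C)).card ≤ 3) :
    ¬ ∃ A B : Finset (ZMod 17), Disjoint A B ∧ A.card = 4 ∧ B.card = 3 ∧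
      ∀ a ∈ A, ∀ b ∈ B, a - b ∈ C := by
  rintro ⟨A, B, -, hA, hB, hAB⟩
  obtain ⟨x, y, z, hxy, hxz, hyz, rfl⟩ := Finset.card_eq_three.mp hB
  have h1 := h (x - y) (x - z) (sub_ne_zero.mpr hxy) (sub_ne_zero.mpr hxz)
    (fun e => hyz (sub_right_injective e))
  have h2 : A.card ≤ (C.filter (fun t => t + (x - y) ∈ C ∧ t + (x - z) ∈ C)).card := by
    apply Finset.card_le_card_of_injOn (fun a => a - x)
    · intro a ha
      have ha' : a ∈ A := ha
      have e1 := hAB a ha' x (by simp)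
      have e2 := hAB a ha' y (by simp)
      have e3 := hAB a ha' z (by simp)
      simp [e1, e2, e3]
    · intro a _ b _ hab
      exact sub_left_injective hab
  omega

/-- The cyclic 2-coloring of `K₁₇` determined by `C₀` and `C₁` has no monochromatic `K_{4,3}`:
there are no disjoint `A, B ⊆ ZMod 17` with `|A| = 4`, `|B| = 3` such that `a - b ∈ C₀` for
all `a ∈ A`, `b ∈ B`, and likewise for `C₁`. -/
theorem cyclic_coloring_no_mono_K43 :
    (¬ ∃ A B : Finset (ZMod 17), Disjoint A B ∧ A.card = 4 ∧ B.card = 3 ∧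
      ∀ a ∈ A, ∀ b ∈ B, a - b ∈ C0) ∧
    (¬ ∃ A B : Finset (ZMod 17), Disjoint A B ∧ A.card = 4 ∧ B.card = 3 ∧
      ∀ a ∈ A, ∀ b ∈ B, a - b ∈ C1) :=
  ⟨aux_gen_s6 C0 aux_C0_s6, aux_gen_s6 C1 aux_C1_s6⟩
end

section
/- The cyclic 2-coloring of K₁₇ determined by C₀ and C₁ has no monochromatic K_{5,2}: there do not exist disjoint subsets A, B of ZMod 17 with |A| = 5 and |B| = 2 such that a − b ∈ C₀ for every a ∈ A and b ∈ B, and likewise there are no such A, B with a − b ∈ C₁ for every a ∈ A and b ∈ B. -/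
theorem K52_aux (C : Finset (ZMod 17))
    (h : ∀ d : ZMod 17, d ≠ 0 → (C.filter (fun x => x + d ∈ C)).card ≤ 4) :
    ¬ ∃ A B : Finset (ZMod 17), Disjoint A B ∧ A.card = 5 ∧ B.card = 2 ∧
      ∀ a ∈ A, ∀ b ∈ B, a - b ∈ C := by
  rintro ⟨A, B, -, hA, hB, hab⟩
  obtain ⟨b, c, hbc, rfl⟩ := Finset.card_eq_two.mp hB
  have h1 := h (b - c) (sub_ne_zero.mpr hbc)
  have h2 : A.card ≤ (C.filter (fun x => x + (b - c) ∈ C)).card := by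
    apply Finset.card_le_card_of_injOn (fun a => a - b)
    · intro a ha
      have e1 := hab a ha b (by simp)
      have e2 := hab a ha c (by simp)
      simp only [Finset.coe_filter, Set.mem_setOf_eq]
      refine ⟨e1, ?_⟩
      rwa [sub_add_sub_cancel]
    · intro x _ y _ hxy
      exact sub_left_injective hxy
  omega

/-- The cyclic 2-coloring of `K₁₇` determined by `C₀` and `C₁` has no monochromatic `K_{5,2}`:
there are no disjoint `A, B ⊆ ZMod 17` with `|A| = 5`, `|B| = 2` such that `a - b ∈ C₀` for
all `a ∈ A`, `b ∈ B`, and likewise for `C₁`. -/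
theorem cyclic_coloring_no_mono_K52 :
    (¬ ∃ A B : Finset (ZMod 17), Disjoint A B ∧ A.card = 5 ∧ B.card = 2 ∧
      ∀ a ∈ A, ∀ b ∈ B, a - b ∈ C0) ∧
    (¬ ∃ A B : Finset (ZMod 17), Disjoint A B ∧ A.card = 5 ∧ B.card = 2 ∧
      ∀ a ∈ A, ∀ b ∈ B, a - b ∈ C1) := by
  exact ⟨K52_aux C0 (by decide), K52_aux C1 (by decide)⟩
end

section
/- There exists a splitting coloring s of the 14-element set P = {1,…,14} that simultaneously has no monochromatic K₄, no monochromatic K_{4,3}, and no monochromatic K_{5,2}. (One such coloring is obtained by restricting to 14 vertices the cyclic coloring of K₁₇ whose b₀ color class is given by the difference set {1,2,4,8,9,13,15,16} in ZMod 17.) -/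
def paleyColor (i j : Fin 14) : Color :=
  bif Nat.beq i.1 j.1 then Color.r else
  bif Nat.testBit 107286 ((i.1 + 17 - j.1) % 17) then Color.b0 else Color.b1

def colorEq : Color → Color → Bool
  | Color.r, Color.r => true
  | Color.b0, Color.b0 => true
  | Color.b1, Color.b1 => true
  | _, _ => false

theorem colorEq_iff (a b : Color) : colorEq a b = true ↔ a = b := by
  cases a <;> cases b <;> simp [colorEq]

theorem paley_symm : ∀ i j : Fin 14, paleyColor i j = paleyColor j i := by decide +kernel

theorem paley_two : ∀ i j : Fin 14, i ≠ j →
    paleyColor i j = Color.b0 ∨ paleyColor i j = Color.b1 := by decide +kernel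

def cnt (p : Fin 14 → Bool) : ℕ := (List.finRange 14).countP p

theorem card_le_cnt (A : Finset (Fin 14)) (p : Fin 14 → Bool) (h : ∀ i ∈ A, p i = true) :
    A.card ≤ cnt p := by
  have h1 : A ⊆ ((List.finRange 14).filter p).toFinset := by
    intro i hi
    simp [h i hi]
  calc A.card ≤ _ := Finset.card_le_card h1
    _ ≤ _ := List.toFinset_card_le _
    _ = cnt p := by rw [cnt, List.countP_eq_length_filter]

theorem no_K4 : ∀ x y : Fin 14, x ≠ y → ∀ z, paleyColor x z = paleyColor x y →
    paleyColor y z = paleyColor x y → ∀ w, paleyColor x w = paleyColor x y →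
    paleyColor y w = paleyColor x y → paleyColor z w ≠ paleyColor x y := by decide +kernel

theorem no_K43 : ∀ x y : Fin 14, x < y → ∀ z, y < z → ∀ b ∈ [Color.r, Color.b0, Color.b1],
    cnt (fun i => colorEq (paleyColor i x) b && colorEq (paleyColor i y) b &&
      colorEq (paleyColor i z) b) ≤ 3 := by decide +kernel

theorem no_K52 : ∀ x y : Fin 14, x ≠ y → ∀ b ∈ [Color.r, Color.b0, Color.b1],
    cnt (fun i => colorEq (paleyColor i x) b && colorEq (paleyColor i y) b) ≤ 4 := by
  decide +kernel

theorem mem_colors (b : Color) : b ∈ [Color.r, Color.b0, Color.b1] := by cases b <;> simp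

theorem card_le_three (A : Finset (Fin 14)) (b : Color) (x y z : Fin 14)
    (hx : ∀ i ∈ A, paleyColor i x = b) (hy : ∀ i ∈ A, paleyColor i y = b)
    (hz : ∀ i ∈ A, paleyColor i z = b) (hxy : x < y) (hyz : y < z) : A.card ≤ 3 :=
  (card_le_cnt A _ (fun i hi => by
    simp [colorEq_iff, hx i hi, hy i hi, hz i hi])).trans (no_K43 x y hxy z hyz b (mem_colors b))

/-- There exists a splitting coloring of the 14-element point set (a symmetric 2-coloring of
the pairs of distinct points with colors `b₀`, `b₁`) that has no monochromatic `K₄`, no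
monochromatic `K_{4,3}`, and no monochromatic `K_{5,2}`. -/
theorem exists_good_splitting_coloring :
    ∃ s : Fin 14 → Fin 14 → Color,
      (∀ i j : Fin 14, i ≠ j → s i j = s j i) ∧
      (∀ i j : Fin 14, i ≠ j → s i j = Color.b0 ∨ s i j = Color.b1) ∧
      -- no monochromatic K₄
      (¬ ∃ (b : Color) (W : Finset (Fin 14)), W.card = 4 ∧
        ∀ i ∈ W, ∀ j ∈ W, i ≠ j → s i j = b) ∧
      -- no monochromatic K_{4,3}
      (¬ ∃ (b : Color) (A B : Finset (Fin 14)), Disjoint A B ∧ A.card = 4 ∧ B.card = 3 ∧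
        ∀ i ∈ A, ∀ j ∈ B, s i j = b) ∧
      -- no monochromatic K_{5,2}
      (¬ ∃ (b : Color) (A B : Finset (Fin 14)), Disjoint A B ∧ A.card = 5 ∧ B.card = 2 ∧
        ∀ i ∈ A, ∀ j ∈ B, s i j = b) := by
  refine ⟨paleyColor, fun i j _ => paley_symm i j, paley_two, ?_, ?_, ?_⟩
  · rintro ⟨b, W, hW, h⟩
    obtain ⟨x, y, z, w, hxy, hxz, hxw, hyz, hyw, hzw, rfl⟩ := Finset.card_eq_four.1 hW
    have e : ∀ i j : Fin 14, i ∈ ({x, y, z, w} : Finset (Fin 14)) → j ∈ ({x, y, z, w} : Finset (Fin 14)) →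
        i ≠ j → paleyColor i j = paleyColor x y := fun i j hi hj hij =>
      (h i hi j hj hij).trans (h x (by simp) y (by simp) hxy).symm
    exact no_K4 x y hxy z (e _ _ (by simp) (by simp) hxz) (e _ _ (by simp) (by simp) hyz) w
      (e _ _ (by simp) (by simp) hxw) (e _ _ (by simp) (by simp) hyw)
      (e _ _ (by simp) (by simp) hzw)
  · rintro ⟨b, A, B, -, hA, hB, h⟩
    obtain ⟨x, y, z, hxy, hxz, hyz, rfl⟩ := Finset.card_eq_three.1 hB
    have hx : ∀ i ∈ A, paleyColor i x = b := fun i hi => h i hi x (by simp)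
    have hy : ∀ i ∈ A, paleyColor i y = b := fun i hi => h i hi y (by simp)
    have hz : ∀ i ∈ A, paleyColor i z = b := fun i hi => h i hi z (by simp)
    have h2 : A.card ≤ 3 := by
      rcases lt_or_gt_of_ne hxy with h1 | h1 <;> rcases lt_or_gt_of_ne hxz with h2 | h2 <;>
        rcases lt_or_gt_of_ne hyz with h3 | h3
      · exact card_le_three A b x y z hx hy hz h1 h3
      · exact card_le_three A b x z y hx hz hy h2 h3
      · exact absurd (h1.trans h3) h2.not_gt
      · exact card_le_three A b z x y hz hx hy h2 h1
      · exact card_le_three A b y x z hy hx hz h1 h2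
      · exact absurd (h3.trans h1) h2.not_gt
      · exact card_le_three A b y z x hy hz hx h3 h2
      · exact card_le_three A b z y x hz hy hx h3 h1
    omega
  · rintro ⟨b, A, B, -, hA, hB, h⟩
    obtain ⟨x, y, hxy, rfl⟩ := Finset.card_eq_two.1 hB
    have h1 := no_K52 x y hxy b (mem_colors b)
    have h2 := (card_le_cnt A _ (fun i hi => by
      have hx := h i hi x (by simp)
      have hy := h i hi y (by simp)
      simp [colorEq_iff, hx, hy])).trans h1
    omega
end

section
/- Let s be a splitting coloring of P = {1,…,14} with no monochromatic K₄, no monochromatic K_{4,3}, and no monochromatic K_{5,2}. Then the induced coloring c on the 3432 seven-element subsets of P is good with respect to M₂: it satisfies conditions (i), (ii), and (iii). -/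
/-- the color that an intersection set determines -/
def Val (s : Fin 14 → Fin 14 → Color) (E : Finset (Fin 14)) (k : Color) : Prop :=
  (E.card = 0 ∧ k = Color.b0) ∨ (E.card = 1 ∧ k = Color.b1) ∨
  (∃ i j, i ≠ j ∧ E = {i, j} ∧ s i j = k) ∨ (3 ≤ E.card ∧ k = Color.r)

theorem region_cards (X Y : Finset (Fin 14)) (hX : X.card = 7) (hY : Y.card = 7) :
    (X \ Y).card + (X ∩ Y).card = 7 ∧ (Y \ X).card + (X ∩ Y).card = 7 ∧
    ((X ∪ Y)ᶜ).card = (X ∩ Y).card := by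
  have h1 := Finset.card_sdiff_add_card_inter X Y
  have h2 := Finset.card_sdiff_add_card_inter Y X
  rw [Finset.inter_comm] at h2
  have h3 := Finset.card_union_add_card_inter X Y
  have h4 := Finset.card_compl (X ∪ Y)
  have h5 := Finset.card_le_univ (X ∪ Y)
  simp only [Fintype.card_fin] at h4 h5
  omega

theorem build0 (X Y a b e : Finset (Fin 14)) (n : ℕ) (hX : X.card = 7) (hY : Y.card = 7)
    (ha : a ⊆ X ∩ Y) (hb : b ⊆ X \ Y) (he : e ⊆ Y \ X) (hn : n ≤ (X ∩ Y).card)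
    (hsum : a.card + b.card + e.card + n = 7) :
    ∃ Z : Finset (Fin 14), Z.card = 7 ∧ X ∩ Z = a ∪ b ∧ Y ∩ Z = a ∪ e ∧
      (a ∪ b).card = a.card + b.card ∧ (a ∪ e).card = a.card + e.card := by
  obtain ⟨-, -, h3⟩ := region_cards X Y hX hY
  obtain ⟨d, hd, hdn⟩ := Finset.exists_subset_card_eq (s := (X ∪ Y)ᶜ) (n := n) (by omega)
  simp only [Finset.subset_iff, Finset.mem_inter, Finset.mem_sdiff, Finset.mem_compl,
    Finset.mem_union] at ha hb he hd
  have dab : Disjoint a b := by rw [Finset.disjoint_left]; grind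
  have dae : Disjoint a e := by rw [Finset.disjoint_left]; grind
  have d1 : Disjoint (a ∪ b) e := by rw [Finset.disjoint_left]; grind
  have d2 : Disjoint (a ∪ b ∪ e) d := by rw [Finset.disjoint_left]; grind
  refine ⟨a ∪ b ∪ e ∪ d, ?_, ?_, ?_, Finset.card_union_of_disjoint dab,
    Finset.card_union_of_disjoint dae⟩
  · rw [Finset.card_union_of_disjoint d2, Finset.card_union_of_disjoint d1,
      Finset.card_union_of_disjoint dab]; omega
  · ext x; simp only [Finset.mem_inter, Finset.mem_union]; grind
  · ext x; simp only [Finset.mem_inter, Finset.mem_union]; grind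

theorem val_pair {s : Fin 14 → Fin 14 → Color} {i j : Fin 14} {k : Color} (h : i ≠ j)
    (hs : s i j = k) : Val s {i, j} k := Or.inr (Or.inr (Or.inl ⟨i, j, h, rfl, hs⟩))

set_option maxHeartbeats 2000000 in
/-- If the splitting coloring `s` has no monochromatic `K₄`, `K_{4,3}`, or `K_{5,2}`, then
the induced coloring `c` on the 3432 seven-element subsets of the 14-point set is good with
respect to `M₂`: it satisfies conditions (i), (ii) and (iii). -/
theorem induced_coloring_good
    -- `s` is a splitting coloring: symmetric with values in {b₀, b₁}
    (s : Fin 14 → Fin 14 → Color)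
    (hssym : ∀ i j : Fin 14, i ≠ j → s i j = s j i)
    (hsblue : ∀ i j : Fin 14, i ≠ j → s i j = Color.b0 ∨ s i j = Color.b1)
    -- `s` has no monochromatic K₄
    (hK4 : ¬ ∃ (b : Color) (W : Finset (Fin 14)), W.card = 4 ∧
      ∀ i ∈ W, ∀ j ∈ W, i ≠ j → s i j = b)
    -- `s` has no monochromatic K_{4,3}
    (hK43 : ¬ ∃ (b : Color) (A B : Finset (Fin 14)), Disjoint A B ∧ A.card = 4 ∧ B.card = 3 ∧
      ∀ i ∈ A, ∀ j ∈ B, s i j = b)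
    -- `s` has no monochromatic K_{5,2}
    (hK52 : ¬ ∃ (b : Color) (A B : Finset (Fin 14)), Disjoint A B ∧ A.card = 5 ∧ B.card = 2 ∧
      ∀ i ∈ A, ∀ j ∈ B, s i j = b)
    -- `c` is the coloring on 7-element subsets induced by `s`
    (c : Finset (Fin 14) → Finset (Fin 14) → Color)
    (hc0 : ∀ X Y : Finset (Fin 14), X.card = 7 → Y.card = 7 →
      (X ∩ Y).card = 0 → c X Y = Color.b0)
    (hc1 : ∀ X Y : Finset (Fin 14), X.card = 7 → Y.card = 7 →
      (X ∩ Y).card = 1 → c X Y = Color.b1)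
    (hc2 : ∀ X Y : Finset (Fin 14), X.card = 7 → Y.card = 7 → ∀ i j : Fin 14, i ≠ j →
      X ∩ Y = {i, j} → c X Y = s i j)
    (hcr : ∀ X Y : Finset (Fin 14), X.card = 7 → Y.card = 7 → X ≠ Y →
      3 ≤ (X ∩ Y).card → c X Y = Color.r)
    :
    -- condition (i): each allowed triangle over each edge occurs
    (∀ X Y : Finset (Fin 14), X.card = 7 → Y.card = 7 → X ≠ Y →
      ∀ j k : Color, M2 (c X Y, j, k) →
      ∃ Z : Finset (Fin 14), Z.card = 7 ∧ Z ≠ X ∧ Z ≠ Y ∧ c Y Z = j ∧ c X Z = k) ∧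
    -- condition (ii): every triangle is allowed
    (∀ X Y Z : Finset (Fin 14), X.card = 7 → Y.card = 7 → Z.card = 7 →
      X ≠ Y → Y ≠ Z → X ≠ Z → M2 (c X Y, c Y Z, c X Z)) ∧
    -- condition (iii): every vertex sees every color
    (∀ X : Finset (Fin 14), X.card = 7 → ∀ ℓ : Color,
      ∃ Y : Finset (Fin 14), Y.card = 7 ∧ Y ≠ X ∧ c X Y = ℓ) := by
  classical
  have hval : ∀ X Z : Finset (Fin 14), X.card = 7 → Z.card = 7 → X ≠ Z → ∀ k,
      Val s (X ∩ Z) k → c X Z = k := by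
    intro X Z hX hZ hne k hv
    rcases hv with ⟨h, rfl⟩ | ⟨h, rfl⟩ | ⟨i, j, hij, h, rfl⟩ | ⟨h, rfl⟩
    · exact hc0 X Z hX hZ h
    · exact hc1 X Z hX hZ h
    · exact hc2 X Z hX hZ i j hij h
    · exact hcr X Z hX hZ hne h
  have hblue : ∀ X Z : Finset (Fin 14), X.card = 7 → Z.card = 7 →
      (X ∩ Z).card ≤ 2 → c X Z = Color.b0 ∨ c X Z = Color.b1 := by
    intro X Z hX hZ h
    have : (X ∩ Z).card = 0 ∨ (X ∩ Z).card = 1 ∨ (X ∩ Z).card = 2 := by omega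
    rcases this with h | h | h
    · exact Or.inl (hc0 X Z hX hZ h)
    · exact Or.inr (hc1 X Z hX hZ h)
    · obtain ⟨i, j, hij, h⟩ := Finset.card_eq_two.1 h
      rw [hc2 X Z hX hZ i j hij h]; exact hsblue i j hij
  have build : ∀ (X Y a b e : Finset (Fin 14)) (n : ℕ) (j k : Color), X.card = 7 → Y.card = 7 →
      a ⊆ X ∩ Y → b ⊆ X \ Y → e ⊆ Y \ X → n ≤ (X ∩ Y).card →
      a.card + b.card + e.card + n = 7 → a.card + b.card < 7 → a.card + e.card < 7 →
      Val s (a ∪ e) j → Val s (a ∪ b) k →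
      ∃ Z : Finset (Fin 14), Z.card = 7 ∧ Z ≠ X ∧ Z ≠ Y ∧ c Y Z = j ∧ c X Z = k := by
    intro X Y a b e n j k hX hY ha hb he hn hsum h1 h2 hj hk
    obtain ⟨Z, hZ, hXZ, hYZ, hab, hae⟩ := build0 X Y a b e n hX hY ha hb he hn hsum
    have n1 : Z ≠ X := by
      rintro rfl
      rw [Finset.inter_self] at hXZ
      rw [← hXZ] at hab; omega
    have n2 : Z ≠ Y := by
      rintro rfl
      rw [Finset.inter_self] at hYZ
      rw [← hYZ] at hae; omega
    exact ⟨Z, hZ, n1, n2, hval Y Z hY hZ n2.symm j (hYZ ▸ hj), hval X Z hX hZ n1.symm k (hXZ ▸ hk)⟩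
  -- a pair of each blue color in each 4-set
  have pair : ∀ S : Finset (Fin 14), 4 ≤ S.card → ∀ k, k ≠ Color.r →
      ∃ i ∈ S, ∃ j ∈ S, i ≠ j ∧ s i j = k := by
    intro S hS k hk
    by_contra hcon
    push Not at hcon
    obtain ⟨W, hW, hWc⟩ := Finset.exists_subset_card_eq hS
    apply hK4
    cases k with
    | r => exact absurd rfl hk
    | b0 => exact ⟨Color.b1, W, hWc, fun i hi j hj hij =>
        (hsblue i j hij).resolve_left (hcon i (hW hi) j (hW hj) hij)⟩
    | b1 => exact ⟨Color.b0, W, hWc, fun i hi j hj hij =>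
        (hsblue i j hij).resolve_right (hcon i (hW hi) j (hW hj) hij)⟩
  have hopp : ∀ k, k ≠ Color.r → ∃ k', ∀ i j, i ≠ j → s i j ≠ k → s i j = k' := by
    intro k hk
    cases k with
    | r => exact absurd rfl hk
    | b0 => exact ⟨Color.b1, fun i j hij h => (hsblue i j hij).resolve_left h⟩
    | b1 => exact ⟨Color.b0, fun i j hij h => (hsblue i j hij).resolve_right h⟩
  -- red / red
  have crr : ∀ X Y : Finset (Fin 14), X.card = 7 → Y.card = 7 → X ≠ Y →
      ∃ Z : Finset (Fin 14), Z.card = 7 ∧ Z ≠ X ∧ Z ≠ Y ∧ c Y Z = Color.r ∧ c X Z = Color.r := by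
    intro X Y hX hY hne
    obtain ⟨r1, r2, r3⟩ := region_cards X Y hX hY
    by_cases ht : (X ∩ Y).card ≤ 2
    · obtain ⟨b, hb, hbc⟩ := Finset.exists_subset_card_eq (s := X \ Y) (n := 3) (by omega)
      obtain ⟨e, he, hec⟩ := Finset.exists_subset_card_eq (s := Y \ X) (n := 4) (by omega)
      refine build X Y ∅ b e 0 _ _ hX hY (by simp) hb he (by omega) (by simp; omega)
        (by simp; omega) (by simp; omega) ?_ ?_
      · right; right; right; simp; omega
      · right; right; right; simp; omega
    · have : (X ∩ Y).card ≠ 7 := by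
        intro h
        have h1 : X ∩ Y = X := Finset.eq_of_subset_of_card_le Finset.inter_subset_left (by omega)
        have h2 : X ∩ Y = Y := Finset.eq_of_subset_of_card_le Finset.inter_subset_right (by omega)
        exact hne (h1.symm.trans h2)
      obtain ⟨a, ha, hac⟩ := Finset.exists_subset_card_eq (s := X ∩ Y) (n := 3) (by omega)
      obtain ⟨b, hb, hbc⟩ := Finset.exists_subset_card_eq (s := X \ Y) (n := 1) (by omega)
      refine build X Y a b ∅ 3 _ _ hX hY ha hb (by simp) (by omega) (by simp; omega)
        (by omega) (by simp; omega) ?_ ?_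
      · right; right; right; simp; omega
      · right; right; right
        have := Finset.card_le_card (Finset.subset_union_left (s₁ := a) (s₂ := b))
        exact ⟨by omega, rfl⟩
  -- red / blue
  have crb : ∀ X Y : Finset (Fin 14), X.card = 7 → Y.card = 7 → X ≠ Y → ∀ k, k ≠ Color.r →
      ∃ Z : Finset (Fin 14), Z.card = 7 ∧ Z ≠ X ∧ Z ≠ Y ∧ c Y Z = Color.r ∧ c X Z = k := by
    intro X Y hX hY hne k hk
    obtain ⟨r1, r2, r3⟩ := region_cards X Y hX hY
    have h7 : (X ∩ Y).card ≠ 7 := by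
      intro h
      have h1 : X ∩ Y = X := Finset.eq_of_subset_of_card_le Finset.inter_subset_left (by omega)
      have h2 : X ∩ Y = Y := Finset.eq_of_subset_of_card_le Finset.inter_subset_right (by omega)
      exact hne (h1.symm.trans h2)
    by_cases ht : (X ∩ Y).card ≤ 4
    · obtain ⟨i, hi, j, hj, hij, hs⟩ := pair X (by omega) k hk
      obtain ⟨e, he, hec⟩ := Finset.exists_subset_card_eq (s := Y \ X)
        (n := 5 - min (X ∩ Y).card 2) (by omega)
      have hp : ({i, j} : Finset (Fin 14)) ⊆ X := by
        intro x hx; simp at hx; rcases hx with rfl | rfl <;> assumption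
      have hpc : ({i, j} : Finset (Fin 14)).card = 2 := Finset.card_pair hij
      have hq := Finset.card_sdiff_add_card_inter ({i, j} : Finset (Fin 14)) Y
      have hq2 := Finset.card_le_card (Finset.inter_subset_inter_right (u := Y) hp)
      have hu : ({i, j} ∩ Y) ∪ ({i, j} \ Y) = ({i, j} : Finset (Fin 14)) := by
        rw [Finset.union_comm]; exact Finset.sdiff_union_inter _ _
      refine build X Y ({i, j} ∩ Y) ({i, j} \ Y) e (min (X ∩ Y).card 2) _ _ hX hY
        (Finset.inter_subset_inter_right hp) (Finset.sdiff_subset_sdiff hp (Finset.Subset.refl _))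
        he (by omega) (by omega) (by omega) (by omega) ?_ ?_
      · right; right; right
        have := Finset.card_le_card (Finset.subset_union_right (s₁ := {i, j} ∩ Y) (s₂ := e))
        exact ⟨by omega, rfl⟩
      · rw [hu]; exact val_pair hij hs
    · obtain ⟨i, hi, j, hj, hij, hs⟩ := pair (X ∩ Y) (by omega) k hk
      obtain ⟨e, he, hec⟩ := Finset.exists_subset_card_eq (s := Y \ X) (n := 1) (by omega)
      have hp : ({i, j} : Finset (Fin 14)) ⊆ X ∩ Y := by
        intro x hx; simp only [Finset.mem_insert, Finset.mem_singleton] at hx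
        rcases hx with rfl | rfl <;> assumption
      have hpc : ({i, j} : Finset (Fin 14)).card = 2 := Finset.card_pair hij
      have hd : Disjoint {i, j} e := by
        rw [Finset.disjoint_left]; intro x hx hx'
        have h1 := hp hx
        have h2 := he hx'
        simp at h1 h2; tauto
      refine build X Y {i, j} ∅ e 4 _ _ hX hY hp (by simp) he (by omega) (by simp only [Finset.card_empty]; omega)
        (by simp only [Finset.card_empty]; omega) (by omega) ?_ ?_
      · right; right; right
        rw [Finset.card_union_of_disjoint hd]
        exact ⟨by omega, rfl⟩
      · rw [Finset.union_empty]; exact val_pair hij hs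
  -- blue / blue, different colors, at least five common points
  have cbd : ∀ X Y : Finset (Fin 14), X.card = 7 → Y.card = 7 → X ≠ Y → 5 ≤ (X ∩ Y).card →
      ∃ Z : Finset (Fin 14), Z.card = 7 ∧ Z ≠ X ∧ Z ≠ Y ∧ c Y Z = Color.b1 ∧ c X Z = Color.b0 := by
    intro X Y hX hY hne ht
    obtain ⟨r1, r2, r3⟩ := region_cards X Y hX hY
    have h7 : (X ∩ Y).card ≠ 7 := by
      intro h
      have h1 : X ∩ Y = X := Finset.eq_of_subset_of_card_le Finset.inter_subset_left (by omega)
      have h2 : X ∩ Y = Y := Finset.eq_of_subset_of_card_le Finset.inter_subset_right (by omega)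
      exact hne (h1.symm.trans h2)
    obtain ⟨e, he, hec⟩ := Finset.exists_subset_card_eq (s := Y \ X) (n := 1) (by omega)
    by_cases h6 : (X ∩ Y).card = 6
    · refine build X Y ∅ ∅ e 6 _ _ hX hY (by simp) (by simp) he (by omega) (by simp; omega)
        (by simp) (by simp; omega) ?_ ?_
      · right; left; simp [hec]
      · left; simp
    · obtain ⟨u, v, huv, hB⟩ := Finset.card_eq_two.1 (show (X \ Y).card = 2 by omega)
      by_cases huv0 : s u v = Color.b0
      · refine build X Y ∅ (X \ Y) e 4 _ _ hX hY (by simp) (Finset.Subset.refl _) he (by omega)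
          (by simp only [Finset.card_empty]; omega) (by simp only [Finset.card_empty]; omega)
          (by simp only [Finset.card_empty]; omega) ?_ ?_
        · right; left; simp [hec]
        · rw [Finset.empty_union, hB]; exact val_pair huv huv0
      · by_cases hex : ∃ x ∈ X ∩ Y, ∃ y ∈ X \ Y, s x y = Color.b0
        · obtain ⟨x, hx, y, hy, hxy⟩ := hex
          have hne' : x ≠ y := by
            rintro rfl; simp at hx hy; tauto
          refine build X Y {x} {y} ∅ 5 _ _ hX hY (by simpa using hx) (by simpa using hy) (by simp)
            (by omega) (by simp) (by simp) (by simp) ?_ ?_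
          · right; left; simp
          · exact val_pair hne' hxy
        · exfalso
          push Not at hex
          refine hK52 ⟨Color.b1, X ∩ Y, X \ Y, ?_, by omega, by omega, ?_⟩
          · rw [Finset.disjoint_left]; intro x hx hy; simp at hx hy; tauto
          · intro x hx y hy
            refine (hsblue x y ?_).resolve_left (hex x hx y hy)
            rintro rfl; simp at hx hy; tauto
  -- exactly four common points: the crucial argument
  have c4 : ∀ X Y : Finset (Fin 14), X.card = 7 → Y.card = 7 → (X ∩ Y).card = 4 → ∀ j k,
      j ≠ Color.r → k ≠ Color.r →
      (∀ u ∈ X \ Y, ∀ v ∈ X \ Y, u ≠ v → s u v ≠ k) →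
      ∃ x ∈ X ∩ Y, ∃ y ∈ X \ Y, ∃ z ∈ Y \ X, s x y = k ∧ s x z = j := by
    intro X Y hX hY ht j k hj hk hB
    obtain ⟨r1, r2, r3⟩ := region_cards X Y hX hY
    by_contra hcon
    push Not at hcon
    obtain ⟨j', hj'⟩ := hopp j hj
    obtain ⟨k', hk'⟩ := hopp k hk
    have hd1 : ∀ x ∈ X ∩ Y, ∀ y ∈ X \ Y, x ≠ y := by
      rintro x hx y hy rfl; simp at hx hy; tauto
    have hd2 : ∀ x ∈ X ∩ Y, ∀ y ∈ Y \ X, x ≠ y := by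
      rintro x hx y hy rfl; simp at hx hy; tauto
    refine hK43 ⟨j', X ∩ Y, Y \ X, ?_, ht, by omega, ?_⟩
    · rw [Finset.disjoint_left]; intro x hx hy; exact hd2 x hx x hy rfl
    · intro x hx z hz
      apply hj' x z (hd2 x hx z hz)
      have : ∃ y ∈ X \ Y, s x y = k := by
        by_contra hno
        push Not at hno
        refine hK4 ⟨k', insert x (X \ Y), ?_, ?_⟩
        · rw [Finset.card_insert_of_notMem (fun h => hd1 x hx x h rfl)]; omega
        · intro p hp q hq hpq
          apply hk' p q hpq
          rw [Finset.mem_insert] at hp hq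
          rcases hp with rfl | hp <;> rcases hq with rfl | hq
          · exact absurd rfl hpq
          · exact hno q hq
          · rw [hssym p q hpq]; exact hno p hp
          · exact hB p hp q hq hpq
      obtain ⟨y, hy, hxy⟩ := this
      exact hcon x hx y hy z hz hxy
  -- blue / blue
  have cbb : ∀ X Y : Finset (Fin 14), X.card = 7 → Y.card = 7 → X ≠ Y → 3 ≤ (X ∩ Y).card →
      ∀ j k, j ≠ Color.r → k ≠ Color.r →
      ∃ Z : Finset (Fin 14), Z.card = 7 ∧ Z ≠ X ∧ Z ≠ Y ∧ c Y Z = j ∧ c X Z = k := by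
    intro X Y hX hY hne ht j k hj hk
    obtain ⟨r1, r2, r3⟩ := region_cards X Y hX hY
    by_cases h5 : 5 ≤ (X ∩ Y).card
    · by_cases hjk : j = k
      · subst hjk
        obtain ⟨u, hu, v, hv, huv, hs⟩ := pair (X ∩ Y) (by omega) j hj
        have hp : ({u, v} : Finset (Fin 14)) ⊆ X ∩ Y := by
          intro x hx; simp only [Finset.mem_insert, Finset.mem_singleton] at hx
          rcases hx with rfl | rfl <;> assumption
        have hpc : ({u, v} : Finset (Fin 14)).card = 2 := Finset.card_pair huv
        refine build X Y {u, v} ∅ ∅ 5 _ _ hX hY hp (by simp) (by simp) h5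
          (by simp [hpc]) (by simp [hpc]) (by simp [hpc]) ?_ ?_
        · rw [Finset.union_empty]; exact val_pair huv hs
        · rw [Finset.union_empty]; exact val_pair huv hs
      · have h5' : 5 ≤ (Y ∩ X).card := by rwa [Finset.inter_comm]
        cases j <;> cases k <;> first | exact absurd rfl hj | exact absurd rfl hk | exact absurd rfl hjk | skip
        · obtain ⟨Z, q1, q2, q3, q4, q5⟩ := cbd Y X hY hX hne.symm h5'
          exact ⟨Z, q1, q3, q2, q5, q4⟩
        · exact cbd X Y hX hY hne h5
    · by_cases hBC : (∃ u ∈ X \ Y, ∃ v ∈ X \ Y, u ≠ v ∧ s u v = k) ∧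
          (∃ u ∈ Y \ X, ∃ v ∈ Y \ X, u ≠ v ∧ s u v = j)
      · obtain ⟨⟨u, hu, v, hv, huv, hs⟩, ⟨u', hu', v', hv', huv', hs'⟩⟩ := hBC
        have hp : ({u, v} : Finset (Fin 14)) ⊆ X \ Y := by
          intro x hx; simp only [Finset.mem_insert, Finset.mem_singleton] at hx
          rcases hx with rfl | rfl <;> assumption
        have hp' : ({u', v'} : Finset (Fin 14)) ⊆ Y \ X := by
          intro x hx; simp only [Finset.mem_insert, Finset.mem_singleton] at hx
          rcases hx with rfl | rfl <;> assumption
        have hpc : ({u, v} : Finset (Fin 14)).card = 2 := Finset.card_pair huv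
        have hpc' : ({u', v'} : Finset (Fin 14)).card = 2 := Finset.card_pair huv'
        refine build X Y ∅ {u, v} {u', v'} 3 _ _ hX hY (by simp) hp hp' ht
          (by simp [hpc, hpc']) (by simp [hpc]) (by simp [hpc']) ?_ ?_
        · rw [Finset.empty_union]; exact val_pair huv' hs'
        · rw [Finset.empty_union]; exact val_pair huv hs
      · have h4 : (X ∩ Y).card = 4 := by
          by_contra h4
          exact hBC ⟨pair (X \ Y) (by omega) k hk, pair (Y \ X) (by omega) j hj⟩
        have key : ∃ x ∈ X ∩ Y, ∃ y ∈ X \ Y, ∃ z ∈ Y \ X, s x y = k ∧ s x z = j := by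
          rw [not_and_or] at hBC
          rcases hBC with h | h
          · push Not at h
            exact c4 X Y hX hY h4 j k hj hk h
          · push Not at h
            obtain ⟨x, hx, y, hy, z, hz, e1, e2⟩ :=
              c4 Y X hY hX (by rwa [Finset.inter_comm]) k j hk hj h
            exact ⟨x, by rwa [Finset.inter_comm], z, hz, y, hy, e2, e1⟩
        obtain ⟨x, hx, y, hy, z, hz, e1, e2⟩ := key
        refine build X Y {x} {y} {z} 4 _ _ hX hY (by simpa using hx) (by simpa using hy)
          (by simpa using hz) (by omega) (by simp) (by simp) (by simp) ?_ ?_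
        · refine val_pair ?_ e2
          rintro rfl; simp at hx hz; tauto
        · refine val_pair ?_ e1
          rintro rfl; simp at hx hy; tauto
  refine ⟨?_, ?_, ?_⟩
  · intro X Y hX hY hne j k hM
    by_cases hj : j = Color.r
    · subst hj
      by_cases hk : k = Color.r
      · subst hk; exact crr X Y hX hY hne
      · exact crb X Y hX hY hne k hk
    · by_cases hk : k = Color.r
      · subst hk
        obtain ⟨Z, q1, q2, q3, q4, q5⟩ := crb Y X hY hX hne.symm j hj
        exact ⟨Z, q1, q3, q2, q5, q4⟩
      · refine cbb X Y hX hY hne ?_ j k hj hk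
        by_contra hlt
        refine hM ⟨hblue X Y hX hY (by omega), ?_, ?_⟩
        · cases j <;> first | exact absurd rfl hj | exact Or.inl rfl | exact Or.inr rfl
        · cases k <;> first | exact absurd rfl hk | exact Or.inl rfl | exact Or.inr rfl
  · rintro X Y Z hX hY hZ hXY hYZ hXZ ⟨h1, h2, h3⟩
    have le : ∀ X Y : Finset (Fin 14), X.card = 7 → Y.card = 7 → X ≠ Y →
        (c X Y = Color.b0 ∨ c X Y = Color.b1) → (X ∩ Y).card ≤ 2 := by
      intro X Y hX hY hne h
      by_contra hlt
      rw [hcr X Y hX hY hne (by omega)] at h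
      simp at h
    have l1 := le X Y hX hY hXY h1
    have l2 := le Y Z hY hZ hYZ h2
    have l3 := le X Z hX hZ hXZ h3
    have e1 := Finset.card_union_add_card_inter X Y
    have e2 := Finset.card_union_add_card_inter (X ∪ Y) Z
    have e3 := Finset.card_union_le (X ∩ Z) (Y ∩ Z)
    rw [← Finset.union_inter_distrib_right] at e3
    have e4 := Finset.card_le_univ (X ∪ Y ∪ Z)
    simp only [Fintype.card_fin] at e4
    omega
  · intro X hX l
    have hcomp : (Xᶜ).card = 7 := by rw [Finset.card_compl, hX]; rfl
    have hne : X ≠ Xᶜ := by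
      intro h
      have : X ∩ Xᶜ = ∅ := Finset.inter_compl X
      rw [← h, Finset.inter_self] at this
      rw [this] at hX; simp at hX
    cases l with
    | r =>
      obtain ⟨Z, q1, q2, q3, q4, q5⟩ := crr X Xᶜ hX hcomp hne
      exact ⟨Z, q1, q2, q5⟩
    | b0 =>
      obtain ⟨Z, q1, q2, q3, q4, q5⟩ := crb X Xᶜ hX hcomp hne Color.b0 (by simp)
      exact ⟨Z, q1, q2, q5⟩
    | b1 =>
      obtain ⟨Z, q1, q2, q3, q4, q5⟩ := crb X Xᶜ hX hcomp hne Color.b1 (by simp)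
      exact ⟨Z, q1, q2, q5⟩
end

section
/- (0-edge case) Let s be a splitting coloring of P = {1,…,14} with no monochromatic K₄, no monochromatic K_{4,3}, and no monochromatic K_{5,2}, and let c be the induced coloring on 7-element subsets of P. Then for all 7-element subsets X, Y of P with X ∩ Y = ∅ (so c(XY) = b₀) and every triple (b₀, j, k) ∈ M₂, there exists a 7-element subset Z of P, distinct from X and Y, with c(XZ) = j and c(YZ) = k. -/
/-- (0-edge case) For 7-element subsets `X`, `Y` with `|X ∩ Y| = 0` (so `c(XY) = b₀`),
every need `(b₀, j, k) ∈ M₂` of the edge `XY` has a witness: a 7-element subset `Z`,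
distinct from `X` and `Y`, with `c(XZ) = j` and `c(YZ) = k`. -/
theorem zero_edge_needs_met
    -- `s` is a splitting coloring: symmetric with values in {b₀, b₁}
    (s : Fin 14 → Fin 14 → Color)
    (hssym : ∀ i j : Fin 14, i ≠ j → s i j = s j i)
    (hsblue : ∀ i j : Fin 14, i ≠ j → s i j = Color.b0 ∨ s i j = Color.b1)
    -- `s` has no monochromatic K₄
    (hK4 : ¬ ∃ (b : Color) (W : Finset (Fin 14)), W.card = 4 ∧
      ∀ i ∈ W, ∀ j ∈ W, i ≠ j → s i j = b)
    -- `s` has no monochromatic K_{4,3}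
    (hK43 : ¬ ∃ (b : Color) (A B : Finset (Fin 14)), Disjoint A B ∧ A.card = 4 ∧ B.card = 3 ∧
      ∀ i ∈ A, ∀ j ∈ B, s i j = b)
    -- `s` has no monochromatic K_{5,2}
    (hK52 : ¬ ∃ (b : Color) (A B : Finset (Fin 14)), Disjoint A B ∧ A.card = 5 ∧ B.card = 2 ∧
      ∀ i ∈ A, ∀ j ∈ B, s i j = b)
    -- `c` is the coloring on 7-element subsets induced by `s`
    (c : Finset (Fin 14) → Finset (Fin 14) → Color)
    (hc0 : ∀ X Y : Finset (Fin 14), X.card = 7 → Y.card = 7 →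
      (X ∩ Y).card = 0 → c X Y = Color.b0)
    (hc1 : ∀ X Y : Finset (Fin 14), X.card = 7 → Y.card = 7 →
      (X ∩ Y).card = 1 → c X Y = Color.b1)
    (hc2 : ∀ X Y : Finset (Fin 14), X.card = 7 → Y.card = 7 → ∀ i j : Fin 14, i ≠ j →
      X ∩ Y = {i, j} → c X Y = s i j)
    (hcr : ∀ X Y : Finset (Fin 14), X.card = 7 → Y.card = 7 → X ≠ Y →
      3 ≤ (X ∩ Y).card → c X Y = Color.r)
    :
    ∀ X Y : Finset (Fin 14), X.card = 7 → Y.card = 7 → (X ∩ Y).card = 0 →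
      ∀ j k : Color, M2 (Color.b0, j, k) →
      ∃ Z : Finset (Fin 14), Z.card = 7 ∧ Z ≠ X ∧ Z ≠ Y ∧ c X Z = j ∧ c Y Z = k := by
  have pair : ∀ X : Finset (Fin 14), X.card = 7 → ∀ b : Color, b ≠ Color.r →
      ∃ i ∈ X, ∃ j ∈ X, i ≠ j ∧ s i j = b := by
    intro X hX b hb
    by_contra hno
    push Not at hno
    obtain ⟨W, hWX, hW⟩ := Finset.exists_subset_card_eq (s := X) (n := 4) (by omega)
    have hn := fun i hi j hj hij => hno i (hWX hi) j (hWX hj) hij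
    cases b with
    | r => exact hb rfl
    | b0 =>
      exact hK4 ⟨Color.b1, W, hW, fun i hi j hj hij =>
        (hsblue i j hij).resolve_left (hn i hi j hj hij)⟩
    | b1 =>
      exact hK4 ⟨Color.b0, W, hW, fun i hi j hj hij =>
        (hsblue i j hij).resolve_right (hn i hi j hj hij)⟩
  have mk : ∀ X Y : Finset (Fin 14), (X ∩ Y).card = 0 → ∀ A B : Finset (Fin 14),
      A ⊆ X → B ⊆ Y → A.card + B.card = 7 →
      (A ∪ B).card = 7 ∧ X ∩ (A ∪ B) = A ∧ Y ∩ (A ∪ B) = B := by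
    intro X Y h A B hA hB hcard
    have hd : ∀ x, x ∈ X → x ∈ Y → False := by
      intro x hx hy
      have h1 : x ∈ X ∩ Y := Finset.mem_inter.2 ⟨hx, hy⟩
      rw [Finset.card_eq_zero.1 h] at h1
      simp at h1
    refine ⟨?_, ?_, ?_⟩
    · rw [Finset.card_union_of_disjoint, hcard]
      exact Finset.disjoint_left.2 fun x hx hy => hd x (hA hx) (hB hy)
    · ext x
      have := hd x
      have := @hA x
      have := @hB x
      simp only [Finset.mem_inter, Finset.mem_union]
      tauto
    · ext x
      have := hd x
      have := @hA x
      have := @hB x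
      simp only [Finset.mem_inter, Finset.mem_union]
      tauto
  have key : ∀ X Y : Finset (Fin 14), X.card = 7 → Y.card = 7 → (X ∩ Y).card = 0 →
      ∀ b : Color, b ≠ Color.r →
      ∃ Z : Finset (Fin 14), Z.card = 7 ∧ Z ≠ X ∧ Z ≠ Y ∧ c X Z = b ∧ c Y Z = Color.r := by
    intro X Y hX hY h b hb
    obtain ⟨i, hi, j, hj, hij, hs⟩ := pair X hX b hb
    obtain ⟨B, hBY, hB⟩ := Finset.exists_subset_card_eq (s := Y) (n := 5) (by omega)
    have h2 : ({i, j} : Finset (Fin 14)).card = 2 := Finset.card_pair hij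
    obtain ⟨hZ, hXZ, hYZ⟩ := mk X Y h {i, j} B
      (by intro x hx; simp only [Finset.mem_insert, Finset.mem_singleton] at hx
          rcases hx with rfl | rfl <;> assumption) hBY (by omega)
    generalize ({i, j} : Finset (Fin 14)) ∪ B = Z at hZ hXZ hYZ
    have hne1 : Z ≠ X := by
      rintro rfl
      rw [Finset.inter_self] at hXZ
      rw [hXZ] at hX
      omega
    have hne2 : Z ≠ Y := by
      rintro rfl
      rw [Finset.inter_self] at hYZ
      rw [hYZ] at hY
      omega
    exact ⟨Z, hZ, hne1, hne2, (hc2 X Z hX hZ i j hij hXZ).trans hs,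
      hcr Y Z hY hZ hne2.symm (by rw [hYZ]; omega)⟩
  intro X Y hX hY h j k hM
  by_cases hj : j = Color.r
  · by_cases hk : k = Color.r
    · subst hj hk
      obtain ⟨A, hAX, hA⟩ := Finset.exists_subset_card_eq (s := X) (n := 3) (by omega)
      obtain ⟨B, hBY, hB⟩ := Finset.exists_subset_card_eq (s := Y) (n := 4) (by omega)
      obtain ⟨hZ, hXZ, hYZ⟩ := mk X Y h A B hAX hBY (by omega)
      generalize A ∪ B = Z at hZ hXZ hYZ
      have hne1 : Z ≠ X := by
        rintro rfl
        rw [Finset.inter_self] at hXZ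
        rw [hXZ] at hX
        omega
      have hne2 : Z ≠ Y := by
        rintro rfl
        rw [Finset.inter_self] at hYZ
        rw [hYZ] at hY
        omega
      exact ⟨Z, hZ, hne1, hne2, hcr X Z hX hZ hne1.symm (by rw [hXZ]; omega),
        hcr Y Z hY hZ hne2.symm (by rw [hYZ]; omega)⟩
    · subst hj
      obtain ⟨Z, h1, h2, h3, h4, h5⟩ := key Y X hY hX (by rwa [Finset.inter_comm]) k hk
      exact ⟨Z, h1, h3, h2, h5, h4⟩
  · by_cases hk : k = Color.r
    · subst hk
      exact key X Y hX hY h j hj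
    · exfalso
      have hcol : ∀ a : Color, a ≠ Color.r → a = Color.b0 ∨ a = Color.b1 := by
        intro a ha
        cases a with
        | r => exact absurd rfl ha
        | b0 => exact Or.inl rfl
        | b1 => exact Or.inr rfl
      exact hM ⟨Or.inl rfl, hcol j hj, hcol k hk⟩
end

section
/- (1-edge case) Let s be a splitting coloring of P = {1,…,14} with no monochromatic K₄, no monochromatic K_{4,3}, and no monochromatic K_{5,2}, and let c be the induced coloring on 7-element subsets of P. Then for all 7-element subsets X, Y of P with |X ∩ Y| = 1 (so c(XY) = b₁) and every triple (b₁, j, k) ∈ M₂, there exists a 7-element subset Z of P, distinct from X and Y, with c(XZ) = j and c(YZ) = k. -/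
theorem aux_b0 (X Y : Finset (Fin 14)) (hX : X.card = 7) (hY : Y.card = 7)
    (h : (X ∩ Y).card = 1) : ∃ Z : Finset (Fin 14), Z.card = 7 ∧ Z ≠ X ∧ Z ≠ Y ∧
      3 ≤ (X ∩ Z).card ∧ (Y ∩ Z).card = 0 := by
  have h1 : (Y ∩ Yᶜ).card = 0 := by simp
  refine ⟨Yᶜ, by rw [Finset.card_compl, hY]; simp, ?_, ?_, ?_, h1⟩
  · intro e
    rw [e, Finset.inter_comm] at h1
    omega
  · intro e
    rw [e, Finset.inter_self] at h1
    omega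
  · have := Finset.card_sdiff_add_card_inter X Y
    rw [← Finset.sdiff_eq_inter_compl]
    omega

theorem aux_b1 (X Y : Finset (Fin 14)) (hX : X.card = 7) (hY : Y.card = 7)
    (h : (X ∩ Y).card = 1) : ∃ Z : Finset (Fin 14), Z.card = 7 ∧ Z ≠ X ∧ Z ≠ Y ∧
      3 ≤ (X ∩ Z).card ∧ (Y ∩ Z).card = 1 := by
  have hx := Finset.card_sdiff_add_card_inter X Y
  have hy := Finset.card_sdiff_add_card_inter Y X
  rw [Finset.inter_comm Y X] at hy
  obtain ⟨y, hyy⟩ : (Y \ X).Nonempty := by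
    rw [← Finset.card_pos]; omega
  have hyY := (Finset.mem_sdiff.mp hyy).1
  have hyX := (Finset.mem_sdiff.mp hyy).2
  have h1 : Y ∩ insert y (X \ Y) = {y} := by
    ext a; simp only [Finset.mem_inter, Finset.mem_insert, Finset.mem_sdiff, Finset.mem_singleton]
    grind
  have h2 : X ∩ insert y (X \ Y) = X \ Y := by
    ext a; simp only [Finset.mem_inter, Finset.mem_insert, Finset.mem_sdiff]
    grind
  refine ⟨insert y (X \ Y), ?_, ?_, ?_, ?_, ?_⟩
  · rw [Finset.card_insert_of_notMem (by simp [hyX])]; omega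
  · intro e
    apply hyX
    rw [← e]; simp
  · intro e
    rw [e, Finset.inter_self] at h1
    rw [h1] at hY
    simp at hY
  · rw [h2]; omega
  · rw [h1]; simp

theorem aux_rr (X Y : Finset (Fin 14)) (hX : X.card = 7) (hY : Y.card = 7)
    (h : (X ∩ Y).card = 1) : ∃ Z : Finset (Fin 14), Z.card = 7 ∧ Z ≠ X ∧ Z ≠ Y ∧
      3 ≤ (X ∩ Z).card ∧ 3 ≤ (Y ∩ Z).card := by
  have hx := Finset.card_sdiff_add_card_inter X Y
  have hy := Finset.card_sdiff_add_card_inter Y X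
  rw [Finset.inter_comm Y X] at hy
  obtain ⟨A, hA, hA3⟩ := Finset.exists_subset_card_eq (s := X \ Y) (n := 3) (by omega)
  obtain ⟨B, hB, hB3⟩ := Finset.exists_subset_card_eq (s := Y \ X) (n := 3) (by omega)
  have hA' : ∀ a ∈ A, a ∈ X ∧ a ∉ Y := fun a ha => Finset.mem_sdiff.mp (hA ha)
  have hB' : ∀ a ∈ B, a ∈ Y ∧ a ∉ X := fun a ha => Finset.mem_sdiff.mp (hB ha)
  have d1 : Disjoint A B := by
    rw [Finset.disjoint_left]; intro a ha hb
    exact (hA' a ha).2 (hB' a hb).1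
  have d2 : Disjoint (A ∪ B) (X ∩ Y) := by
    rw [Finset.disjoint_left]; intro a ha hb
    rw [Finset.mem_inter] at hb
    rcases Finset.mem_union.mp ha with ha | ha
    · exact (hA' a ha).2 hb.2
    · exact (hB' a ha).2 hb.1
  obtain ⟨a, ha⟩ : A.Nonempty := by rw [← Finset.card_pos]; omega
  obtain ⟨b, hb⟩ : B.Nonempty := by rw [← Finset.card_pos]; omega
  refine ⟨(A ∪ B) ∪ (X ∩ Y), ?_, ?_, ?_, ?_, ?_⟩
  · rw [Finset.card_union_of_disjoint d2, Finset.card_union_of_disjoint d1]; omega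
  · intro e
    apply (hB' b hb).2
    rw [← e]; simp [hb]
  · intro e
    apply (hA' a ha).2
    rw [← e]; simp [ha]
  · rw [← hA3]; apply Finset.card_le_card
    intro x hx; simp [hx, (hA' x hx).1]
  · rw [← hB3]; apply Finset.card_le_card
    intro x hx; simp [hx, (hB' x hx).1]

/-- (1-edge case) For 7-element subsets `X`, `Y` with `|X ∩ Y| = 1` (so `c(XY) = b₁`),
every need `(b₁, j, k) ∈ M₂` of the edge `XY` has a witness: a 7-element subset `Z`,
distinct from `X` and `Y`, with `c(XZ) = j` and `c(YZ) = k`. -/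
theorem one_edge_needs_met
    -- `s` is a splitting coloring: symmetric with values in {b₀, b₁}
    (s : Fin 14 → Fin 14 → Color)
    (hssym : ∀ i j : Fin 14, i ≠ j → s i j = s j i)
    (hsblue : ∀ i j : Fin 14, i ≠ j → s i j = Color.b0 ∨ s i j = Color.b1)
    -- `s` has no monochromatic K₄
    (hK4 : ¬ ∃ (b : Color) (W : Finset (Fin 14)), W.card = 4 ∧
      ∀ i ∈ W, ∀ j ∈ W, i ≠ j → s i j = b)
    -- `s` has no monochromatic K_{4,3}
    (hK43 : ¬ ∃ (b : Color) (A B : Finset (Fin 14)), Disjoint A B ∧ A.card = 4 ∧ B.card = 3 ∧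
      ∀ i ∈ A, ∀ j ∈ B, s i j = b)
    -- `s` has no monochromatic K_{5,2}
    (hK52 : ¬ ∃ (b : Color) (A B : Finset (Fin 14)), Disjoint A B ∧ A.card = 5 ∧ B.card = 2 ∧
      ∀ i ∈ A, ∀ j ∈ B, s i j = b)
    -- `c` is the coloring on 7-element subsets induced by `s`
    (c : Finset (Fin 14) → Finset (Fin 14) → Color)
    (hc0 : ∀ X Y : Finset (Fin 14), X.card = 7 → Y.card = 7 →
      (X ∩ Y).card = 0 → c X Y = Color.b0)
    (hc1 : ∀ X Y : Finset (Fin 14), X.card = 7 → Y.card = 7 →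
      (X ∩ Y).card = 1 → c X Y = Color.b1)
    (hc2 : ∀ X Y : Finset (Fin 14), X.card = 7 → Y.card = 7 → ∀ i j : Fin 14, i ≠ j →
      X ∩ Y = {i, j} → c X Y = s i j)
    (hcr : ∀ X Y : Finset (Fin 14), X.card = 7 → Y.card = 7 → X ≠ Y →
      3 ≤ (X ∩ Y).card → c X Y = Color.r)
    :
    ∀ X Y : Finset (Fin 14), X.card = 7 → Y.card = 7 → (X ∩ Y).card = 1 →
      ∀ j k : Color, M2 (Color.b1, j, k) →
      ∃ Z : Finset (Fin 14), Z.card = 7 ∧ Z ≠ X ∧ Z ≠ Y ∧ c X Z = j ∧ c Y Z = k := by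
  intro X Y hX hY h j k hM
  have h' : (Y ∩ X).card = 1 := by rw [Finset.inter_comm]; exact h
  cases j <;> cases k
  · obtain ⟨Z, hZ, hZX, hZY, h1, h2⟩ := aux_rr X Y hX hY h
    exact ⟨Z, hZ, hZX, hZY, hcr X Z hX hZ hZX.symm h1, hcr Y Z hY hZ hZY.symm h2⟩
  · obtain ⟨Z, hZ, hZX, hZY, h1, h2⟩ := aux_b0 X Y hX hY h
    exact ⟨Z, hZ, hZX, hZY, hcr X Z hX hZ hZX.symm h1, hc0 Y Z hY hZ h2⟩
  · obtain ⟨Z, hZ, hZX, hZY, h1, h2⟩ := aux_b1 X Y hX hY h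
    exact ⟨Z, hZ, hZX, hZY, hcr X Z hX hZ hZX.symm h1, hc1 Y Z hY hZ h2⟩
  · obtain ⟨Z, hZ, hZY, hZX, h1, h2⟩ := aux_b0 Y X hY hX h'
    exact ⟨Z, hZ, hZX, hZY, hc0 X Z hX hZ h2, hcr Y Z hY hZ hZY.symm h1⟩
  · simp [M2] at hM
  · simp [M2] at hM
  · obtain ⟨Z, hZ, hZY, hZX, h1, h2⟩ := aux_b1 Y X hY hX h'
    exact ⟨Z, hZ, hZX, hZY, hc1 X Z hX hZ h2, hcr Y Z hY hZ hZY.symm h1⟩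
  · simp [M2] at hM
  · simp [M2] at hM
end

section
/- (2-edge case) Let s be a splitting coloring of P = {1,…,14} with no monochromatic K₄, no monochromatic K_{4,3}, and no monochromatic K_{5,2}, and let c be the induced coloring on 7-element subsets of P. Then for all 7-element subsets X, Y of P with |X ∩ Y| = 2 (so c(XY) ∈ {b₀, b₁}) and every triple (c(XY), j, k) ∈ M₂, there exists a 7-element subset Z of P, distinct from X and Y, with c(XZ) = j and c(YZ) = k. -/
theorem aux0 (X Y : Finset (Fin 14)) (hX : X.card = 7) (hY : Y.card = 7)
    (h : (X ∩ Y).card = 2) :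
    ∃ Z : Finset (Fin 14), Z.card = 7 ∧ 3 ≤ (X ∩ Z).card ∧ (Y ∩ Z).card = 0 := by
  refine ⟨Yᶜ, ?_, ?_, ?_⟩
  · rw [Finset.card_compl, hY]; rfl
  · have := Finset.card_sdiff_add_card_inter X Y
    rw [← Finset.sdiff_eq_inter_compl]; omega
  · simp

theorem aux1 (X Y : Finset (Fin 14)) (hX : X.card = 7) (hY : Y.card = 7)
    (h : (X ∩ Y).card = 2) :
    ∃ Z : Finset (Fin 14), Z.card = 7 ∧ 3 ≤ (X ∩ Z).card ∧ (Y ∩ Z).card = 1 := by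
  have h5 := Finset.card_sdiff_add_card_inter X Y
  obtain ⟨p, hp⟩ : (X ∩ Y).Nonempty := Finset.card_pos.mp (by omega)
  obtain ⟨q, hq⟩ : (X \ Y).Nonempty := Finset.card_pos.mp (by omega)
  have hp' := Finset.mem_inter.mp hp
  have hq' := Finset.mem_sdiff.mp hq
  have hc : (Yᶜ).card = 7 := by rw [Finset.card_compl, hY]; rfl
  refine ⟨insert p (Yᶜ.erase q), ?_, ?_, ?_⟩
  · rw [Finset.card_insert_of_notMem (by simp [hp'.2]),
      Finset.card_erase_of_mem (by simp [hq'.2]), hc]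
  · have h4 : ((X \ Y).erase q).card = 4 := by
      rw [Finset.card_erase_of_mem hq]; omega
    have : (X \ Y).erase q ⊆ X ∩ insert p (Yᶜ.erase q) := by
      intro x hx; simp at hx ⊢; tauto
    have := Finset.card_le_card this
    omega
  · have : Y ∩ insert p (Yᶜ.erase q) = {p} := by
      ext x; simp
      constructor
      · tauto
      · rintro rfl; tauto
    simp [this]

theorem aux2 (X Y : Finset (Fin 14)) (hX : X.card = 7) (hY : Y.card = 7)
    (h : (X ∩ Y).card = 2) :
    ∃ Z : Finset (Fin 14), Z.card = 7 ∧ 3 ≤ (X ∩ Z).card ∧ 3 ≤ (Y ∩ Z).card := by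
  have h5 := Finset.card_sdiff_add_card_inter X Y
  have h5' := Finset.card_sdiff_add_card_inter Y X
  rw [Finset.inter_comm Y X] at h5'
  obtain ⟨T, hT, hTc⟩ := Finset.exists_subset_card_eq (s := X \ Y) (n := 3) (by omega)
  obtain ⟨U, hU, hUc⟩ := Finset.exists_subset_card_eq (s := Y \ X) (n := 2) (by omega)
  have d1 : Disjoint (X ∩ Y) T := by
    rw [Finset.disjoint_left]; intro x hx hx'
    have := hT hx'; simp at hx this; tauto
  have d2 : Disjoint (X ∩ Y) U := by
    rw [Finset.disjoint_left]; intro x hx hx'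
    have := hU hx'; simp at hx this; tauto
  have d3 : Disjoint (X ∩ Y ∪ T) U := by
    rw [Finset.disjoint_union_left]; refine ⟨d2, ?_⟩
    rw [Finset.disjoint_left]; intro x hx hx'
    have := hU hx'; have := hT hx; simp at *; tauto
  have c1 := Finset.card_union_of_disjoint d1
  have c2 := Finset.card_union_of_disjoint d2
  have c3 := Finset.card_union_of_disjoint d3
  refine ⟨X ∩ Y ∪ T ∪ U, by omega, ?_, ?_⟩
  · have : X ∩ Y ∪ T ⊆ X ∩ (X ∩ Y ∪ T ∪ U) := by
      intro x hx; have := @hT x; simp at *; tauto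
    have := Finset.card_le_card this
    omega
  · have : X ∩ Y ∪ U ⊆ Y ∩ (X ∩ Y ∪ T ∪ U) := by
      intro x hx; have := @hU x; simp at *; tauto
    have := Finset.card_le_card this
    omega

/-- (2-edge case) For 7-element subsets `X`, `Y` with `|X ∩ Y| = 2` (so `c(XY) = b_i`),
every need `(b_i, j, k) ∈ M₂` of the edge `XY` has a witness: a 7-element subset `Z`,
distinct from `X` and `Y`, with `c(XZ) = j` and `c(YZ) = k`. -/
theorem two_edge_needs_met
    -- `s` is a splitting coloring: symmetric with values in {b₀, b₁}
    (s : Fin 14 → Fin 14 → Color)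
    (hssym : ∀ i j : Fin 14, i ≠ j → s i j = s j i)
    (hsblue : ∀ i j : Fin 14, i ≠ j → s i j = Color.b0 ∨ s i j = Color.b1)
    -- `s` has no monochromatic K₄
    (hK4 : ¬ ∃ (b : Color) (W : Finset (Fin 14)), W.card = 4 ∧
      ∀ i ∈ W, ∀ j ∈ W, i ≠ j → s i j = b)
    -- `s` has no monochromatic K_{4,3}
    (hK43 : ¬ ∃ (b : Color) (A B : Finset (Fin 14)), Disjoint A B ∧ A.card = 4 ∧ B.card = 3 ∧
      ∀ i ∈ A, ∀ j ∈ B, s i j = b)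
    -- `s` has no monochromatic K_{5,2}
    (hK52 : ¬ ∃ (b : Color) (A B : Finset (Fin 14)), Disjoint A B ∧ A.card = 5 ∧ B.card = 2 ∧
      ∀ i ∈ A, ∀ j ∈ B, s i j = b)
    -- `c` is the coloring on 7-element subsets induced by `s`
    (c : Finset (Fin 14) → Finset (Fin 14) → Color)
    (hc0 : ∀ X Y : Finset (Fin 14), X.card = 7 → Y.card = 7 →
      (X ∩ Y).card = 0 → c X Y = Color.b0)
    (hc1 : ∀ X Y : Finset (Fin 14), X.card = 7 → Y.card = 7 →
      (X ∩ Y).card = 1 → c X Y = Color.b1)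
    (hc2 : ∀ X Y : Finset (Fin 14), X.card = 7 → Y.card = 7 → ∀ i j : Fin 14, i ≠ j →
      X ∩ Y = {i, j} → c X Y = s i j)
    (hcr : ∀ X Y : Finset (Fin 14), X.card = 7 → Y.card = 7 → X ≠ Y →
      3 ≤ (X ∩ Y).card → c X Y = Color.r)
    :
    ∀ X Y : Finset (Fin 14), X.card = 7 → Y.card = 7 → (X ∩ Y).card = 2 →
      ∀ j k : Color, M2 (c X Y, j, k) →
      ∃ Z : Finset (Fin 14), Z.card = 7 ∧ Z ≠ X ∧ Z ≠ Y ∧ c X Z = j ∧ c Y Z = k := by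
  intro X Y hX hY h j k hM
  have h' : (Y ∩ X).card = 2 := by rwa [Finset.inter_comm]
  have hb : c X Y = Color.b0 ∨ c X Y = Color.b1 := by
    obtain ⟨i, l, hil, he⟩ := Finset.card_eq_two.mp h
    rw [hc2 X Y hX hY i l hil he]
    exact hsblue i l hil
  have ne : ∀ Z W : Finset (Fin 14), W.card = 7 → (W ∩ Z).card < 7 → Z ≠ W := by
    rintro Z W hW hlt rfl
    rw [Finset.inter_self] at hlt; omega
  have key0 : ∀ X Y : Finset (Fin 14), X.card = 7 → Y.card = 7 → (X ∩ Y).card = 2 →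
      ∃ Z : Finset (Fin 14), Z.card = 7 ∧ Z ≠ X ∧ Z ≠ Y ∧ c X Z = Color.r ∧ c Y Z = Color.b0 := by
    intro X Y hX hY h
    obtain ⟨Z, hZ, h3, h0⟩ := aux0 X Y hX hY h
    have hne : Z ≠ X := by
      rintro rfl; rw [Finset.inter_comm] at h; omega
    exact ⟨Z, hZ, hne, ne Z Y hY (by omega), hcr X Z hX hZ hne.symm h3, hc0 Y Z hY hZ h0⟩
  have key1 : ∀ X Y : Finset (Fin 14), X.card = 7 → Y.card = 7 → (X ∩ Y).card = 2 →
      ∃ Z : Finset (Fin 14), Z.card = 7 ∧ Z ≠ X ∧ Z ≠ Y ∧ c X Z = Color.r ∧ c Y Z = Color.b1 := by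
    intro X Y hX hY h
    obtain ⟨Z, hZ, h3, h0⟩ := aux1 X Y hX hY h
    have hne : Z ≠ X := by
      rintro rfl; rw [Finset.inter_comm] at h; omega
    exact ⟨Z, hZ, hne, ne Z Y hY (by omega), hcr X Z hX hZ hne.symm h3, hc1 Y Z hY hZ h0⟩
  have swap : ∀ j k, (∃ Z : Finset (Fin 14), Z.card = 7 ∧ Z ≠ Y ∧ Z ≠ X ∧ c Y Z = k ∧ c X Z = j) →
      ∃ Z : Finset (Fin 14), Z.card = 7 ∧ Z ≠ X ∧ Z ≠ Y ∧ c X Z = j ∧ c Y Z = k := by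
    rintro j k ⟨Z, a, b, d, e, f⟩
    exact ⟨Z, a, d, b, f, e⟩
  cases j <;> cases k
  · obtain ⟨Z, hZ, h3, h0⟩ := aux2 X Y hX hY h
    have hne : Z ≠ X := by
      rintro rfl; omega
    have hne' : Z ≠ Y := by
      rintro rfl; omega
    exact ⟨Z, hZ, hne, hne', hcr X Z hX hZ hne.symm h3, hcr Y Z hY hZ hne'.symm h0⟩
  · exact key0 X Y hX hY h
  · exact key1 X Y hX hY h
  · exact swap _ _ (key0 Y X hY hX h')
  · exact absurd ⟨hb, by simp, by simp⟩ hM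
  · exact absurd ⟨hb, by simp, by simp⟩ hM
  · exact swap _ _ (key1 Y X hY hX h')
  · exact absurd ⟨hb, by simp, by simp⟩ hM
  · exact absurd ⟨hb, by simp, by simp⟩ hM
end

section
/- (3-edge case) Let s be a splitting coloring of P = {1,…,14} with no monochromatic K₄, no monochromatic K_{4,3}, and no monochromatic K_{5,2}, and let c be the induced coloring on 7-element subsets of P. Then for all 7-element subsets X, Y of P with |X ∩ Y| = 3 (so c(XY) = r) and every triple (r, j, k) ∈ M₂, there exists a 7-element subset Z of P, distinct from X and Y, with c(XZ) = j and c(YZ) = k. -/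
theorem aux_Z (X Y T a b : Finset (Fin 14)) (hX : X.card = 7) (hY : Y.card = 7)
    (hXY : (X ∩ Y).card = 3) (hT : T ⊆ X ∩ Y) (ha : a ⊆ X \ Y) (hb : b ⊆ Y \ X)
    (hn : T.card + a.card + b.card = 4) :
    ∃ Z : Finset (Fin 14), Z.card = 7 ∧ X ∩ Z = T ∪ a ∧ Y ∩ Z = T ∪ b ∧
      (T ∪ a).card = T.card + a.card ∧ (T ∪ b).card = T.card + b.card := by
  have hT' : ∀ x ∈ T, x ∈ X ∧ x ∈ Y := fun x hx => by simpa using hT hx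
  have ha' : ∀ x ∈ a, x ∈ X ∧ x ∉ Y := fun x hx => by simpa using ha hx
  have hb' : ∀ x ∈ b, x ∈ Y ∧ x ∉ X := fun x hx => by simpa using hb hx
  have h1 : Disjoint T a := Finset.disjoint_left.2 fun x h h' => (ha' x h').2 (hT' x h).2
  have h2 : Disjoint T b := Finset.disjoint_left.2 fun x h h' => (hb' x h').2 (hT' x h).1
  have h3 : Disjoint (T ∪ a) b := Finset.disjoint_left.2 fun x h h' => by grind [Finset.mem_compl]
  have h4 : Disjoint (T ∪ a ∪ b) (X ∪ Y)ᶜ := Finset.disjoint_left.2 fun x h h' => by grind [Finset.mem_compl]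
  have hD : ((X ∪ Y)ᶜ).card = 3 := by
    have := Finset.card_union_add_card_inter X Y
    rw [Finset.card_compl, Fintype.card_fin]
    omega
  refine ⟨T ∪ a ∪ b ∪ (X ∪ Y)ᶜ, ?_, ?_, ?_, Finset.card_union_of_disjoint h1,
    Finset.card_union_of_disjoint h2⟩
  · rw [Finset.card_union_of_disjoint h4, Finset.card_union_of_disjoint h3,
      Finset.card_union_of_disjoint h1]
    omega
  · ext x; grind [Finset.mem_compl]
  · ext x; grind [Finset.mem_compl]

/-- (3-edge case) For 7-element subsets `X`, `Y` with `|X ∩ Y| = 3` (so `c(XY) = r`),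
every need `(r, j, k) ∈ M₂` of the edge `XY` has a witness: a 7-element subset `Z`,
distinct from `X` and `Y`, with `c(XZ) = j` and `c(YZ) = k`. -/
theorem three_edge_needs_met
    -- `s` is a splitting coloring: symmetric with values in {b₀, b₁}
    (s : Fin 14 → Fin 14 → Color)
    (hssym : ∀ i j : Fin 14, i ≠ j → s i j = s j i)
    (hsblue : ∀ i j : Fin 14, i ≠ j → s i j = Color.b0 ∨ s i j = Color.b1)
    -- `s` has no monochromatic K₄
    (hK4 : ¬ ∃ (b : Color) (W : Finset (Fin 14)), W.card = 4 ∧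
      ∀ i ∈ W, ∀ j ∈ W, i ≠ j → s i j = b)
    -- `s` has no monochromatic K_{4,3}
    (hK43 : ¬ ∃ (b : Color) (A B : Finset (Fin 14)), Disjoint A B ∧ A.card = 4 ∧ B.card = 3 ∧
      ∀ i ∈ A, ∀ j ∈ B, s i j = b)
    -- `s` has no monochromatic K_{5,2}
    (hK52 : ¬ ∃ (b : Color) (A B : Finset (Fin 14)), Disjoint A B ∧ A.card = 5 ∧ B.card = 2 ∧
      ∀ i ∈ A, ∀ j ∈ B, s i j = b)
    -- `c` is the coloring on 7-element subsets induced by `s`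
    (c : Finset (Fin 14) → Finset (Fin 14) → Color)
    (hc0 : ∀ X Y : Finset (Fin 14), X.card = 7 → Y.card = 7 →
      (X ∩ Y).card = 0 → c X Y = Color.b0)
    (hc1 : ∀ X Y : Finset (Fin 14), X.card = 7 → Y.card = 7 →
      (X ∩ Y).card = 1 → c X Y = Color.b1)
    (hc2 : ∀ X Y : Finset (Fin 14), X.card = 7 → Y.card = 7 → ∀ i j : Fin 14, i ≠ j →
      X ∩ Y = {i, j} → c X Y = s i j)
    (hcr : ∀ X Y : Finset (Fin 14), X.card = 7 → Y.card = 7 → X ≠ Y →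
      3 ≤ (X ∩ Y).card → c X Y = Color.r)
    :
    ∀ X Y : Finset (Fin 14), X.card = 7 → Y.card = 7 → (X ∩ Y).card = 3 →
      ∀ j k : Color, M2 (Color.r, j, k) →
      ∃ Z : Finset (Fin 14), Z.card = 7 ∧ Z ≠ X ∧ Z ≠ Y ∧ c X Z = j ∧ c Y Z = k := by
  intro X Y hX hY hXY j k _
  have hA : (X \ Y).card = 4 := by
    have := Finset.card_sdiff_add_card_inter X Y
    omega
  have hB : (Y \ X).card = 4 := by
    have := Finset.card_sdiff_add_card_inter Y X
    rw [Finset.inter_comm] at this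
    omega
  -- both blues occur inside every 4-set
  have key : ∀ W : Finset (Fin 14), W.card = 4 → ∀ b : Color, b ≠ Color.r →
      ∃ p ∈ W, ∃ q ∈ W, p ≠ q ∧ s p q = b := by
    intro W hW b hb
    by_contra hcon
    push Not at hcon
    cases b with
    | r => exact hb rfl
    | b0 => exact hK4 ⟨Color.b1, W, hW, fun p hp q hq hpq =>
        (hsblue p q hpq).resolve_left (hcon p hp q hq hpq)⟩
    | b1 => exact hK4 ⟨Color.b0, W, hW, fun p hp q hq hpq =>
        (hsblue p q hpq).resolve_right (hcon p hp q hq hpq)⟩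
  -- a witness from admissible parts
  have ne_of : ∀ U Z : Finset (Fin 14), U.card = 7 → (U ∩ Z).card ≤ 6 → Z ≠ U := by
    intro U Z hU h e
    subst e
    rw [Finset.inter_self] at h
    omega
  -- red on one side, blue on the other
  have redblue : ∀ X Y : Finset (Fin 14), X.card = 7 → Y.card = 7 → (X ∩ Y).card = 3 →
      (X \ Y).card = 4 → (Y \ X).card = 4 → ∀ k : Color, k ≠ Color.r →
      ∃ Z : Finset (Fin 14), Z.card = 7 ∧ Z ≠ X ∧ Z ≠ Y ∧ c X Z = Color.r ∧ c Y Z = k := by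
    intro X Y hX hY hXY hA hB k hk
    cases k with
    | r => exact absurd rfl hk
    | b0 =>
      obtain ⟨Z, hZ, e1, e2, n1, n2⟩ := aux_Z X Y ∅ (X \ Y) ∅ hX hY hXY (by simp) (by simp)
        (by simp) (by simp [hA])
      rw [← e1] at n1
      rw [← e2] at n2
      simp only [Finset.card_empty, hA] at n1 n2
      have hZX := ne_of X Z hX (by omega)
      exact ⟨Z, hZ, hZX, ne_of Y Z hY (by omega), hcr X Z hX hZ hZX.symm (by omega),
        hc0 Y Z hY hZ n2⟩
    | b1 =>
      obtain ⟨a, ha, hac⟩ := Finset.exists_subset_card_eq (s := X \ Y) (n := 3) (by omega)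
      obtain ⟨b, hb, hbc⟩ := Finset.exists_subset_card_eq (s := Y \ X) (n := 1) (by omega)
      obtain ⟨Z, hZ, e1, e2, n1, n2⟩ := aux_Z X Y ∅ a b hX hY hXY (by simp) ha hb
        (by simp [hac, hbc])
      rw [← e1] at n1
      rw [← e2] at n2
      simp only [Finset.card_empty, hac, hbc] at n1 n2
      have hZX := ne_of X Z hX (by omega)
      exact ⟨Z, hZ, hZX, ne_of Y Z hY (by omega), hcr X Z hX hZ hZX.symm (by omega),
        hc1 Y Z hY hZ (by omega)⟩
  by_cases hj : j = Color.r
  · subst hj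
    by_cases hk : k = Color.r
    · subst hk
      obtain ⟨T, hT, hTc⟩ := Finset.exists_subset_card_eq (s := X ∩ Y) (n := 2) (by omega)
      obtain ⟨a, ha, hac⟩ := Finset.exists_subset_card_eq (s := X \ Y) (n := 1) (by omega)
      obtain ⟨b, hb, hbc⟩ := Finset.exists_subset_card_eq (s := Y \ X) (n := 1) (by omega)
      obtain ⟨Z, hZ, e1, e2, n1, n2⟩ := aux_Z X Y T a b hX hY hXY hT ha hb (by omega)
      rw [← e1] at n1
      rw [← e2] at n2
      have hZX := ne_of X Z hX (by omega)
      have hZY := ne_of Y Z hY (by omega)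
      exact ⟨Z, hZ, hZX, hZY, hcr X Z hX hZ hZX.symm (by omega),
        hcr Y Z hY hZ hZY.symm (by omega)⟩
    · exact redblue X Y hX hY hXY hA hB k hk
  · by_cases hk : k = Color.r
    · subst hk
      obtain ⟨Z, h1, h2, h3, h4, h5⟩ :=
        redblue Y X hY hX (by rw [Finset.inter_comm]; exact hXY) hB hA j hj
      exact ⟨Z, h1, h3, h2, h5, h4⟩
    · obtain ⟨p, hp, q, hq, hpq, hs⟩ := key _ hA j hj
      obtain ⟨u, hu, v, hv, huv, hs'⟩ := key _ hB k hk
      have c1 := Finset.card_pair hpq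
      have c2 := Finset.card_pair huv
      obtain ⟨Z, hZ, e1, e2, n1, n2⟩ := aux_Z X Y ∅ {p, q} {u, v} hX hY hXY (by simp)
        (Finset.insert_subset hp (Finset.singleton_subset_iff.2 hq))
        (Finset.insert_subset hu (Finset.singleton_subset_iff.2 hv)) (by rw [c1, c2]; simp)
      rw [← e1, c1, Finset.card_empty] at n1
      rw [← e2, c2, Finset.card_empty] at n2
      rw [Finset.empty_union] at e1 e2
      exact ⟨Z, hZ, ne_of X Z hX (by omega), ne_of Y Z hY (by omega),
        (hc2 X Z hX hZ p q hpq e1).trans hs, (hc2 Y Z hY hZ u v huv e2).trans hs'⟩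
end

section
/- (4-edge case) Let s be a splitting coloring of P = {1,…,14} with no monochromatic K₄, no monochromatic K_{4,3}, and no monochromatic K_{5,2}, and let c be the induced coloring on 7-element subsets of P. Then for all 7-element subsets X, Y of P with |X ∩ Y| = 4 (so c(XY) = r) and every triple (r, j, k) ∈ M₂, there exists a 7-element subset Z of P, distinct from X and Y, with c(XZ) = j and c(YZ) = k. -/
theorem disj_aux (X Y : Finset (Fin 14)) : Disjoint (X ∩ Y) (X \ Y) := by
  rw [Finset.disjoint_left]; intro z h1 h2
  exact (Finset.mem_sdiff.mp h2).2 (Finset.mem_inter.mp h1).2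

theorem col_aux (a b : Color) (hb : b ≠ Color.r) (h : a = Color.b0 ∨ a = Color.b1)
    (hne : a ≠ (if b = Color.b0 then Color.b1 else Color.b0)) : a = b := by
  cases b <;> simp_all

theorem key_aux (X Y A B C : Finset (Fin 14)) (hX : X.card = 7) (hY : Y.card = 7)
    (hI : (X ∩ Y).card = 4) (hA : A ⊆ X ∩ Y) (hB : B ⊆ X \ Y) (hC : C ⊆ Y \ X)
    (h3 : 3 ≤ A.card + B.card + C.card) (h7 : A.card + B.card + C.card ≤ 7)
    (hAB : A.card + B.card ≤ 6) (hAC : A.card + C.card ≤ 6) :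
    ∃ Z : Finset (Fin 14), Z.card = 7 ∧ Z ≠ X ∧ Z ≠ Y ∧ X ∩ Z = A ∪ B ∧ Y ∩ Z = A ∪ C := by
  have hU := Finset.card_union_add_card_inter X Y
  have hO : (X ∪ Y)ᶜ.card = 4 := by
    rw [Finset.card_compl, Fintype.card_fin]; omega
  obtain ⟨D, hD, hDc⟩ := Finset.exists_subset_card_eq
    (show 7 - (A.card + B.card + C.card) ≤ (X ∪ Y)ᶜ.card by omega)
  have mA : ∀ z ∈ A, z ∈ X ∧ z ∈ Y := fun z hz => by simpa using hA hz
  have mB : ∀ z ∈ B, z ∈ X ∧ z ∉ Y := fun z hz => by simpa using hB hz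
  have mC : ∀ z ∈ C, z ∈ Y ∧ z ∉ X := fun z hz => by simpa using hC hz
  have mD : ∀ z ∈ D, z ∉ X ∧ z ∉ Y := fun z hz => by simpa using hD hz
  have e1 : X ∩ (A ∪ B ∪ C ∪ D) = A ∪ B := by
    ext z; simp only [Finset.mem_inter, Finset.mem_union]
    have := mA z; have := mB z; have := mC z; have := mD z; tauto
  have e2 : Y ∩ (A ∪ B ∪ C ∪ D) = A ∪ C := by
    ext z; simp only [Finset.mem_inter, Finset.mem_union]
    have := mA z; have := mB z; have := mC z; have := mD z; tauto
  have c1 : (A ∪ B ∪ C ∪ D).card = 7 := by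
    rw [Finset.card_union_of_disjoint, Finset.card_union_of_disjoint,
      Finset.card_union_of_disjoint]
    · omega
    · rw [Finset.disjoint_left]; intro z h1 h2
      have := mA z; have := mB z; tauto
    · rw [Finset.disjoint_left]; intro z h1 h2
      rw [Finset.mem_union] at h1
      have := mA z; have := mB z; have := mC z; tauto
    · rw [Finset.disjoint_left]; intro z h1 h2
      simp only [Finset.mem_union] at h1
      have := mA z; have := mB z; have := mC z; have := mD z; tauto
  have u1 := Finset.card_union_le A B
  have u2 := Finset.card_union_le A C
  refine ⟨_, c1, ?_, ?_, e1, e2⟩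
  · intro h; rw [h, Finset.inter_self] at e1; rw [e1] at hX; omega
  · intro h; rw [h, Finset.inter_self] at e2; rw [e2] at hY; omega

/-- (4-edge case) For 7-element subsets `X`, `Y` with `|X ∩ Y| = 4` (so `c(XY) = r`),
every need `(r, j, k) ∈ M₂` of the edge `XY` has a witness: a 7-element subset `Z`,
distinct from `X` and `Y`, with `c(XZ) = j` and `c(YZ) = k`. -/
theorem four_edge_needs_met
    -- `s` is a splitting coloring: symmetric with values in {b₀, b₁}
    (s : Fin 14 → Fin 14 → Color)
    (hssym : ∀ i j : Fin 14, i ≠ j → s i j = s j i)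
    (hsblue : ∀ i j : Fin 14, i ≠ j → s i j = Color.b0 ∨ s i j = Color.b1)
    -- `s` has no monochromatic K₄
    (hK4 : ¬ ∃ (b : Color) (W : Finset (Fin 14)), W.card = 4 ∧
      ∀ i ∈ W, ∀ j ∈ W, i ≠ j → s i j = b)
    -- `s` has no monochromatic K_{4,3}
    (hK43 : ¬ ∃ (b : Color) (A B : Finset (Fin 14)), Disjoint A B ∧ A.card = 4 ∧ B.card = 3 ∧
      ∀ i ∈ A, ∀ j ∈ B, s i j = b)
    -- `s` has no monochromatic K_{5,2}
    (hK52 : ¬ ∃ (b : Color) (A B : Finset (Fin 14)), Disjoint A B ∧ A.card = 5 ∧ B.card = 2 ∧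
      ∀ i ∈ A, ∀ j ∈ B, s i j = b)
    -- `c` is the coloring on 7-element subsets induced by `s`
    (c : Finset (Fin 14) → Finset (Fin 14) → Color)
    (hc0 : ∀ X Y : Finset (Fin 14), X.card = 7 → Y.card = 7 →
      (X ∩ Y).card = 0 → c X Y = Color.b0)
    (hc1 : ∀ X Y : Finset (Fin 14), X.card = 7 → Y.card = 7 →
      (X ∩ Y).card = 1 → c X Y = Color.b1)
    (hc2 : ∀ X Y : Finset (Fin 14), X.card = 7 → Y.card = 7 → ∀ i j : Fin 14, i ≠ j →
      X ∩ Y = {i, j} → c X Y = s i j)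
    (hcr : ∀ X Y : Finset (Fin 14), X.card = 7 → Y.card = 7 → X ≠ Y →
      3 ≤ (X ∩ Y).card → c X Y = Color.r)
    :
    ∀ X Y : Finset (Fin 14), X.card = 7 → Y.card = 7 → (X ∩ Y).card = 4 →
      ∀ j k : Color, M2 (Color.r, j, k) →
      ∃ Z : Finset (Fin 14), Z.card = 7 ∧ Z ≠ X ∧ Z ≠ Y ∧ c X Z = j ∧ c Y Z = k := by
  intro X Y hX hY hI j k _
  have hX' : (X \ Y).card = 3 := by
    have := Finset.card_sdiff_add_card_inter X Y; omega
  have hY' : (Y \ X).card = 3 := by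
    have := Finset.card_sdiff_add_card_inter Y X
    rw [Finset.inter_comm] at this; omega
  have ne : ∀ T : Finset (Fin 14), T.card = 3 → ∃ t, t ∈ T := fun T hT =>
    Finset.card_pos.mp (by omega)
  have b01 : ∀ i j : Fin 14, i ≠ j → s i j ≠ Color.b0 → s i j = Color.b1 := fun i j h h' =>
    (hsblue i j h).resolve_left h'
  have b10 : ∀ i j : Fin 14, i ≠ j → s i j ≠ Color.b1 → s i j = Color.b0 := fun i j h h' =>
    (hsblue i j h).resolve_right h'
  -- no vertex extends a monochromatic triangle
  have tri : ∀ (T : Finset (Fin 14)) (b : Color), T.card = 3 →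
      (∀ p ∈ T, ∀ q ∈ T, p ≠ q → s p q = b) → ∀ i, i ∉ T → ∃ t ∈ T, s i t ≠ b := by
    intro T b hT hm i hi
    by_contra hcon
    push Not at hcon
    refine hK4 ⟨b, insert i T, by rw [Finset.card_insert_of_notMem hi, hT], ?_⟩
    intro p hp q hq hpq
    rw [Finset.mem_insert] at hp hq
    rcases hp with rfl | hp <;> rcases hq with rfl | hq
    · exact absurd rfl hpq
    · exact hcon q hq
    · rw [hssym _ _ hpq]; exact hcon p hp
    · exact hm p hp q hq hpq
  have k43 : ∀ (T : Finset (Fin 14)) (b : Color), T.card = 3 → Disjoint (X ∩ Y) T →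
      ∃ i ∈ X ∩ Y, ∃ t ∈ T, s i t ≠ b := by
    intro T b hT hd
    by_contra hcon
    push Not at hcon
    exact hK43 ⟨b, X ∩ Y, T, hd, hI, hT, hcon⟩
  have dX : Disjoint (X ∩ Y) (X \ Y) := by
    exact disj_aux _ _
  have dY : Disjoint (X ∩ Y) (Y \ X) := by
    rw [Finset.inter_comm]; exact disj_aux _ _
  have w12 : ∀ p ∈ Y \ X, ∀ q ∈ Y \ X, p ≠ q →
      ∃ Z : Finset (Fin 14), Z.card = 7 ∧ Z ≠ X ∧ Z ≠ Y ∧ c X Z = Color.b1 ∧ c Y Z = s p q := by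
    intro p hp q hq hpq
    obtain ⟨t, ht⟩ := ne _ hX'
    have hc := Finset.card_pair hpq
    obtain ⟨Z, hZ, n1, n2, e1, e2⟩ := key_aux X Y ∅ {t} {p, q} hX hY hI (by simp)
      (by simpa using ht) (by intro z hz; simp only [Finset.mem_insert, Finset.mem_singleton] at hz; rcases hz with rfl | rfl <;> assumption)
      (by simp [hc]) (by simp [hc]) (by simp) (by simp [hc])
    exact ⟨Z, hZ, n1, n2, hc1 X Z hX hZ (by rw [e1]; simp),
      hc2 Y Z hY hZ p q hpq (by rw [e2]; simp)⟩
  have w21 : ∀ p ∈ X \ Y, ∀ q ∈ X \ Y, p ≠ q →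
      ∃ Z : Finset (Fin 14), Z.card = 7 ∧ Z ≠ X ∧ Z ≠ Y ∧ c X Z = s p q ∧ c Y Z = Color.b1 := by
    intro p hp q hq hpq
    obtain ⟨t, ht⟩ := ne _ hY'
    have hc := Finset.card_pair hpq
    obtain ⟨Z, hZ, n1, n2, e1, e2⟩ := key_aux X Y ∅ {p, q} {t} hX hY hI (by simp)
      (by intro z hz; simp only [Finset.mem_insert, Finset.mem_singleton] at hz; rcases hz with rfl | rfl <;> assumption)
      (by simpa using ht)
      (by simp [hc]) (by simp [hc]) (by simp [hc]) (by simp)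
    exact ⟨Z, hZ, n1, n2, hc2 X Z hX hZ p q hpq (by rw [e1]; simp),
      hc1 Y Z hY hZ (by rw [e2]; simp)⟩
  have w22 : ∀ p ∈ X \ Y, ∀ q ∈ X \ Y, p ≠ q → ∀ u ∈ Y \ X, ∀ v ∈ Y \ X, u ≠ v →
      ∃ Z : Finset (Fin 14), Z.card = 7 ∧ Z ≠ X ∧ Z ≠ Y ∧ c X Z = s p q ∧ c Y Z = s u v := by
    intro p hp q hq hpq u hu v hv huv
    have hc := Finset.card_pair hpq
    have hc' := Finset.card_pair huv
    obtain ⟨Z, hZ, n1, n2, e1, e2⟩ := key_aux X Y ∅ {p, q} {u, v} hX hY hI (by simp)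
      (by intro z hz; simp only [Finset.mem_insert, Finset.mem_singleton] at hz; rcases hz with rfl | rfl <;> assumption)
      (by intro z hz; simp only [Finset.mem_insert, Finset.mem_singleton] at hz; rcases hz with rfl | rfl <;> assumption)
      (by simp [hc, hc']) (by simp [hc, hc']) (by simp [hc]) (by simp [hc'])
    exact ⟨Z, hZ, n1, n2, hc2 X Z hX hZ p q hpq (by rw [e1]; simp),
      hc2 Y Z hY hZ u v huv (by rw [e2]; simp)⟩
  have neX : ∀ i ∈ X ∩ Y, ∀ x ∈ X \ Y, i ≠ x := fun i hi x hx => 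
    Finset.disjoint_iff_ne.mp dX i hi x hx
  have neY : ∀ i ∈ X ∩ Y, ∀ x ∈ Y \ X, i ≠ x := fun i hi x hx => 
    Finset.disjoint_iff_ne.mp dY i hi x hx
  have niX : ∀ i ∈ X ∩ Y, i ∉ X \ Y := fun i hi h => neX i hi i h rfl
  have niY : ∀ i ∈ X ∩ Y, i ∉ Y \ X := fun i hi h => neY i hi i h rfl
  have w111 : ∀ i ∈ X ∩ Y, ∀ x ∈ X \ Y, ∀ y ∈ Y \ X,
      ∃ Z : Finset (Fin 14), Z.card = 7 ∧ Z ≠ X ∧ Z ≠ Y ∧ c X Z = s i x ∧ c Y Z = s i y := by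
    intro i hi x hx y hy
    obtain ⟨Z, hZ, n1, n2, e1, e2⟩ := key_aux X Y {i} {x} {y} hX hY hI
      (Finset.singleton_subset_iff.mpr hi) (Finset.singleton_subset_iff.mpr hx)
      (Finset.singleton_subset_iff.mpr hy) (by simp) (by simp) (by simp) (by simp)
    exact ⟨Z, hZ, n1, n2, hc2 X Z hX hZ i x (neX i hi x hx) (by rw [e1]; rfl),
      hc2 Y Z hY hZ i y (neY i hi y hy) (by rw [e2]; rfl)⟩
  -- monochromatic `b1` on one private part
  have LX : (∀ p ∈ X \ Y, ∀ q ∈ X \ Y, p ≠ q → s p q = Color.b1) → ∀ b, b ≠ Color.r →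
      ∃ Z : Finset (Fin 14), Z.card = 7 ∧ Z ≠ X ∧ Z ≠ Y ∧ c X Z = Color.b0 ∧ c Y Z = b := by
    intro hm b hb
    obtain ⟨i, hi, y, hy, hne⟩ := k43 (Y \ X) (if b = Color.b0 then Color.b1 else Color.b0) hY' dY
    obtain ⟨x, hx, hne'⟩ := tri _ _ hX' hm i (niX i hi)
    have h := w111 i hi x hx y hy
    rw [b10 _ _ (neX i hi x hx) hne'] at h
    have : s i y = b := col_aux _ _ hb (hsblue i y (neY i hi y hy)) hne
    rwa [this] at h
  have LY : (∀ p ∈ Y \ X, ∀ q ∈ Y \ X, p ≠ q → s p q = Color.b1) → ∀ b, b ≠ Color.r →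
      ∃ Z : Finset (Fin 14), Z.card = 7 ∧ Z ≠ X ∧ Z ≠ Y ∧ c X Z = b ∧ c Y Z = Color.b0 := by
    intro hm b hb
    obtain ⟨i, hi, x, hx, hne⟩ := k43 (X \ Y) (if b = Color.b0 then Color.b1 else Color.b0) hX' dX
    obtain ⟨y, hy, hne'⟩ := tri _ _ hY' hm i (niY i hi)
    have h := w111 i hi x hx y hy
    rw [b10 _ _ (neY i hi y hy) hne'] at h
    have : s i x = b := col_aux _ _ hb (hsblue i x (neX i hi x hx)) hne
    rwa [this] at h
  have dich : ∀ (T : Finset (Fin 14)), (∀ p ∈ T, ∀ q ∈ T, p ≠ q → s p q = Color.b1) ∨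
      ∃ p ∈ T, ∃ q ∈ T, p ≠ q ∧ s p q = Color.b0 := by
    intro T
    by_contra hcon
    push Not at hcon
    obtain ⟨⟨p, hp, q, hq, hpq, h⟩, h2⟩ := hcon
    exact h2 p hp q hq hpq (b10 p q hpq h)
  have dich' : ∀ (T : Finset (Fin 14)), (∀ p ∈ T, ∀ q ∈ T, p ≠ q → s p q = Color.b0) ∨
      ∃ p ∈ T, ∃ q ∈ T, p ≠ q ∧ s p q = Color.b1 := by
    intro T
    by_contra hcon
    push Not at hcon
    obtain ⟨⟨p, hp, q, hq, hpq, h⟩, h2⟩ := hcon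
    exact h2 p hp q hq hpq (b01 p q hpq h)
  cases j <;> cases k
  · obtain ⟨Z, hZ, n1, n2, e1, e2⟩ := key_aux X Y ∅ (X \ Y) (Y \ X) hX hY hI (by simp)
      (Finset.Subset.refl _) (Finset.Subset.refl _) (by simp [hX']) (by simp [hX', hY'])
      (by simp [hX']) (by simp [hY'])
    exact ⟨Z, hZ, n1, n2, hcr X Z hX hZ n1.symm (by rw [e1]; simp [hX']),
      hcr Y Z hY hZ n2.symm (by rw [e2]; simp [hY'])⟩
  · obtain ⟨Z, hZ, n1, n2, e1, e2⟩ := key_aux X Y ∅ (X \ Y) ∅ hX hY hI (by simp)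
      (Finset.Subset.refl _) (by simp) (by simp [hX']) (by simp [hX']) (by simp [hX']) (by simp)
    exact ⟨Z, hZ, n1, n2, hcr X Z hX hZ n1.symm (by rw [e1]; simp [hX']),
      hc0 Y Z hY hZ (by rw [e2]; simp)⟩
  · obtain ⟨t, ht⟩ := ne _ hY'
    obtain ⟨Z, hZ, n1, n2, e1, e2⟩ := key_aux X Y ∅ (X \ Y) {t} hX hY hI (by simp)
      (Finset.Subset.refl _) (Finset.singleton_subset_iff.mpr ht) (by simp [hX']) (by simp [hX'])
      (by simp [hX']) (by simp)
    exact ⟨Z, hZ, n1, n2, hcr X Z hX hZ n1.symm (by rw [e1]; simp [hX']),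
      hc1 Y Z hY hZ (by rw [e2]; simp)⟩
  · obtain ⟨Z, hZ, n1, n2, e1, e2⟩ := key_aux X Y ∅ ∅ (Y \ X) hX hY hI (by simp)
      (by simp) (Finset.Subset.refl _) (by simp [hY']) (by simp [hY']) (by simp) (by simp [hY'])
    exact ⟨Z, hZ, n1, n2, hc0 X Z hX hZ (by rw [e1]; simp),
      hcr Y Z hY hZ n2.symm (by rw [e2]; simp [hY'])⟩
  · rcases dich (X \ Y) with h | ⟨p, hp, q, hq, hpq, h⟩
    · exact LX h _ (by simp)
    rcases dich (Y \ X) with h' | ⟨u, hu, v, hv, huv, h'⟩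
    · exact LY h' _ (by simp)
    have := w22 p hp q hq hpq u hu v hv huv
    rwa [h, h'] at this
  · rcases dich (X \ Y) with h | ⟨p, hp, q, hq, hpq, h⟩
    · exact LX h _ (by simp)
    have := w21 p hp q hq hpq
    rwa [h] at this
  · obtain ⟨t, ht⟩ := ne _ hX'
    obtain ⟨Z, hZ, n1, n2, e1, e2⟩ := key_aux X Y ∅ {t} (Y \ X) hX hY hI (by simp)
      (Finset.singleton_subset_iff.mpr ht) (Finset.Subset.refl _) (by simp [hY']) (by simp [hY'])
      (by simp) (by simp [hY'])
    exact ⟨Z, hZ, n1, n2, hc1 X Z hX hZ (by rw [e1]; simp),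
      hcr Y Z hY hZ n2.symm (by rw [e2]; simp [hY'])⟩
  · rcases dich (Y \ X) with h | ⟨p, hp, q, hq, hpq, h⟩
    · exact LY h _ (by simp)
    have := w12 p hp q hq hpq
    rwa [h] at this
  · rcases dich' (X \ Y) with h | ⟨p, hp, q, hq, hpq, h⟩
    · rcases dich' (Y \ X) with h' | ⟨p, hp, q, hq, hpq, h'⟩
      · obtain ⟨i, hi⟩ : (X ∩ Y).Nonempty := Finset.card_pos.mp (by omega)
        obtain ⟨x, hx, hxn⟩ := tri _ _ hX' h i (niX i hi)
        obtain ⟨y, hy, hyn⟩ := tri _ _ hY' h' i (niY i hi)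
        have := w111 i hi x hx y hy
        rwa [b01 _ _ (neX i hi x hx) hxn, b01 _ _ (neY i hi y hy) hyn] at this
      · have := w12 p hp q hq hpq
        rwa [h'] at this
    · have := w21 p hp q hq hpq
      rwa [h] at this
end

section
/- (5-edge case) Let s be a splitting coloring of P = {1,…,14} with no monochromatic K₄, no monochromatic K_{4,3}, and no monochromatic K_{5,2}, and let c be the induced coloring on 7-element subsets of P. Then for all 7-element subsets X, Y of P with |X ∩ Y| = 5 (so c(XY) = r) and every triple (r, j, k) ∈ M₂, there exists a 7-element subset Z of P, distinct from X and Y, with c(XZ) = j and c(YZ) = k. -/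
theorem ext_aux (X Y S : Finset (Fin 14)) (hX : X.card = 7) (hY : Y.card = 7)
    (h5 : (X ∩ Y).card = 5) (hS : S ⊆ X ∪ Y) (h2 : 2 ≤ S.card) (h6 : S.card < 7) :
    ∃ Z : Finset (Fin 14), Z.card = 7 ∧ Z ≠ X ∧ Z ≠ Y ∧ X ∩ Z = X ∩ S ∧ Y ∩ Z = Y ∩ S := by
  have hU : (X ∪ Y).card = 9 := by
    have := Finset.card_union_add_card_inter X Y
    omega
  have hD : ((X ∪ Y)ᶜ).card = 5 := by
    rw [Finset.card_compl, hU]; rfl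
  obtain ⟨T, hT, hTc⟩ := Finset.exists_subset_card_eq (s := (X ∪ Y)ᶜ) (n := 7 - S.card) (by omega)
  have hTX : ∀ x ∈ T, x ∉ X ∧ x ∉ Y := by
    intro x hx
    have := hT hx
    simpa using this
  have hd : Disjoint S T := by
    rw [Finset.disjoint_left]
    intro x hx hxT
    have := hS hx
    have h := hTX x hxT
    simp [h.1, h.2] at this
  have eX : X ∩ (S ∪ T) = X ∩ S := by
    ext x
    have := hTX x
    simp only [Finset.mem_inter, Finset.mem_union]
    tauto
  have eY : Y ∩ (S ∪ T) = Y ∩ S := by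
    ext x
    have := hTX x
    simp only [Finset.mem_inter, Finset.mem_union]
    tauto
  refine ⟨S ∪ T, ?_, ?_, ?_, eX, eY⟩
  · rw [Finset.card_union_of_disjoint hd]; omega
  · intro h
    rw [h, Finset.inter_self] at eX
    have := Finset.card_le_card (Finset.inter_subset_right (s₁ := X) (s₂ := S))
    rw [← eX] at this
    omega
  · intro h
    rw [h, Finset.inter_self] at eY
    have := Finset.card_le_card (Finset.inter_subset_right (s₁ := Y) (s₂ := S))
    rw [← eY] at this
    omega

/-- (5-edge case) For 7-element subsets `X`, `Y` with `|X ∩ Y| = 5` (so `c(XY) = r`),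
every need `(r, j, k) ∈ M₂` of the edge `XY` has a witness: a 7-element subset `Z`,
distinct from `X` and `Y`, with `c(XZ) = j` and `c(YZ) = k`. -/
theorem five_edge_needs_met
    -- `s` is a splitting coloring: symmetric with values in {b₀, b₁}
    (s : Fin 14 → Fin 14 → Color)
    (hssym : ∀ i j : Fin 14, i ≠ j → s i j = s j i)
    (hsblue : ∀ i j : Fin 14, i ≠ j → s i j = Color.b0 ∨ s i j = Color.b1)
    -- `s` has no monochromatic K₄
    (hK4 : ¬ ∃ (b : Color) (W : Finset (Fin 14)), W.card = 4 ∧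
      ∀ i ∈ W, ∀ j ∈ W, i ≠ j → s i j = b)
    -- `s` has no monochromatic K_{4,3}
    (hK43 : ¬ ∃ (b : Color) (A B : Finset (Fin 14)), Disjoint A B ∧ A.card = 4 ∧ B.card = 3 ∧
      ∀ i ∈ A, ∀ j ∈ B, s i j = b)
    -- `s` has no monochromatic K_{5,2}
    (hK52 : ¬ ∃ (b : Color) (A B : Finset (Fin 14)), Disjoint A B ∧ A.card = 5 ∧ B.card = 2 ∧
      ∀ i ∈ A, ∀ j ∈ B, s i j = b)
    -- `c` is the coloring on 7-element subsets induced by `s`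
    (c : Finset (Fin 14) → Finset (Fin 14) → Color)
    (hc0 : ∀ X Y : Finset (Fin 14), X.card = 7 → Y.card = 7 →
      (X ∩ Y).card = 0 → c X Y = Color.b0)
    (hc1 : ∀ X Y : Finset (Fin 14), X.card = 7 → Y.card = 7 →
      (X ∩ Y).card = 1 → c X Y = Color.b1)
    (hc2 : ∀ X Y : Finset (Fin 14), X.card = 7 → Y.card = 7 → ∀ i j : Fin 14, i ≠ j →
      X ∩ Y = {i, j} → c X Y = s i j)
    (hcr : ∀ X Y : Finset (Fin 14), X.card = 7 → Y.card = 7 → X ≠ Y →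
      3 ≤ (X ∩ Y).card → c X Y = Color.r)
    :
    ∀ X Y : Finset (Fin 14), X.card = 7 → Y.card = 7 → (X ∩ Y).card = 5 →
      ∀ j k : Color, M2 (Color.r, j, k) →
      ∃ Z : Finset (Fin 14), Z.card = 7 ∧ Z ≠ X ∧ Z ≠ Y ∧ c X Z = j ∧ c Y Z = k := by
  intro X Y hX hY h5 j k _
  -- pairs of both colors inside a 5-set
  have pair : ∀ C : Finset (Fin 14), C.card = 5 → ∀ b : Color, b ≠ Color.r →
      ∃ p ∈ C, ∃ q ∈ C, p ≠ q ∧ s p q = b := by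
    intro C hC b hb
    by_contra hcon
    push Not at hcon
    obtain ⟨W, hW, hWc⟩ := Finset.exists_subset_card_eq (s := C) (n := 4) (by omega)
    apply hK4
    refine ⟨if b = Color.b0 then Color.b1 else Color.b0, W, hWc, ?_⟩
    intro p hp q hq hpq
    have h1 := hcon p (hW hp) q (hW hq) hpq
    have h2 := hsblue p q hpq
    cases b <;> simp_all
  -- mixed witness
  have mixed : ∀ X Y : Finset (Fin 14), X.card = 7 → Y.card = 7 → (X ∩ Y).card = 5 →
      ∃ Z : Finset (Fin 14), Z.card = 7 ∧ Z ≠ X ∧ Z ≠ Y ∧ c X Z = Color.b0 ∧ c Y Z = Color.b1 := by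
    intro X Y hX hY h5
    have hA : (X \ Y).card = 2 := by
      have := Finset.card_sdiff_add_card_inter X Y
      omega
    have : ∃ p ∈ X ∩ Y, ∃ q ∈ X \ Y, s p q = Color.b0 := by
      by_contra hcon
      push Not at hcon
      apply hK52
      refine ⟨Color.b1, X ∩ Y, X \ Y, ?_, h5, hA, ?_⟩
      · rw [Finset.disjoint_left]
        intro x hx hx'
        simp at hx hx'
        tauto
      · intro p hp q hq
        have hpq : p ≠ q := by
          rintro rfl
          simp at hp hq
          tauto
        exact (hsblue p q hpq).resolve_left (hcon p hp q hq)
    obtain ⟨p, hp, q, hq, hs⟩ := this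
    simp only [Finset.mem_inter, Finset.mem_sdiff] at hp hq
    have hpq : p ≠ q := by
      rintro rfl
      tauto
    have hc : ({p, q} : Finset (Fin 14)).card = 2 := Finset.card_pair hpq
    obtain ⟨Z, hZ, hZX, hZY, e1, e2⟩ := ext_aux X Y {p, q} hX hY h5
      (by intro x hx; simp at hx ⊢; rcases hx with rfl | rfl <;> tauto) (by omega) (by omega)
    refine ⟨Z, hZ, hZX, hZY, ?_, ?_⟩
    · rw [hc2 X Z hX hZ p q hpq _, hs]
      rw [e1]
      ext x; simp; rintro (rfl | rfl) <;> tauto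
    · apply hc1 Y Z hY hZ
      rw [e2]
      have : Y ∩ {p, q} = {p} := by
        ext x; simp
        constructor
        · rintro ⟨h, rfl | rfl⟩ <;> tauto
        · rintro rfl; tauto
      rw [this]; simp
  -- red / blue witness
  have redb : ∀ X Y : Finset (Fin 14), X.card = 7 → Y.card = 7 → (X ∩ Y).card = 5 →
      ∀ b : Color, b ≠ Color.r →
      ∃ Z : Finset (Fin 14), Z.card = 7 ∧ Z ≠ X ∧ Z ≠ Y ∧ c X Z = Color.r ∧ c Y Z = b := by
    intro X Y hX hY h5 b hb
    have hA : (X \ Y).card = 2 := by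
      have := Finset.card_sdiff_add_card_inter X Y
      omega
    obtain ⟨a, ha⟩ := Finset.card_pos.1 (by omega : 0 < (X \ Y).card)
    obtain ⟨p, hp, q, hq, hpq, hs⟩ := pair _ h5 b hb
    simp only [Finset.mem_inter, Finset.mem_sdiff] at hp hq ha
    have hap : a ≠ p := by
      rintro rfl
      tauto
    have haq : a ≠ q := by
      rintro rfl
      tauto
    have hc : ({a, p, q} : Finset (Fin 14)).card = 3 := Finset.card_eq_three.2 ⟨a, p, q, hap, haq, hpq, rfl⟩
    obtain ⟨Z, hZ, hZX, hZY, e1, e2⟩ := ext_aux X Y {a, p, q} hX hY h5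
      (by intro x hx; simp at hx ⊢; rcases hx with rfl | rfl | rfl <;> tauto) (by omega) (by omega)
    refine ⟨Z, hZ, hZX, hZY, ?_, ?_⟩
    · apply hcr X Z hX hZ hZX.symm
      rw [e1, Finset.inter_eq_right.2, hc]
      intro x hx; simp at hx; rcases hx with rfl | rfl | rfl <;> tauto
    · rw [hc2 Y Z hY hZ p q hpq _, hs]
      rw [e2]
      ext x; simp
      constructor
      · rintro ⟨h, rfl | rfl | rfl⟩ <;> tauto
      · rintro (rfl | rfl) <;> tauto
  have same : ∀ b : Color, b ≠ Color.r →
      ∃ Z : Finset (Fin 14), Z.card = 7 ∧ Z ≠ X ∧ Z ≠ Y ∧ c X Z = b ∧ c Y Z = b := by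
    intro b hb
    obtain ⟨p, hp, q, hq, hpq, hs⟩ := pair _ h5 b hb
    simp only [Finset.mem_inter] at hp hq
    have hc : ({p, q} : Finset (Fin 14)).card = 2 := Finset.card_pair hpq
    obtain ⟨Z, hZ, hZX, hZY, e1, e2⟩ := ext_aux X Y {p, q} hX hY h5
      (by intro x hx; simp at hx ⊢; rcases hx with rfl | rfl <;> tauto) (by omega) (by omega)
    refine ⟨Z, hZ, hZX, hZY, ?_, ?_⟩
    · rw [hc2 X Z hX hZ p q hpq _, hs]
      rw [e1]
      ext x; simp; rintro (rfl | rfl) <;> tauto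
    · rw [hc2 Y Z hY hZ p q hpq _, hs]
      rw [e2]
      ext x; simp; rintro (rfl | rfl) <;> tauto
  have h5' : (Y ∩ X).card = 5 := by rwa [Finset.inter_comm]
  have rr : ∃ Z : Finset (Fin 14), Z.card = 7 ∧ Z ≠ X ∧ Z ≠ Y ∧ c X Z = Color.r ∧ c Y Z = Color.r := by
    obtain ⟨Z, hZ, hZX, hZY, e1, e2⟩ := ext_aux X Y (X ∩ Y) hX hY h5
      (fun x hx => Finset.mem_union_left _ (Finset.mem_inter.1 hx).1) (by omega) (by omega)
    refine ⟨Z, hZ, hZX, hZY, hcr X Z hX hZ hZX.symm ?_, hcr Y Z hY hZ hZY.symm ?_⟩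
    · rw [e1, Finset.inter_eq_right.2 Finset.inter_subset_left]; omega
    · rw [e2, Finset.inter_eq_right.2 Finset.inter_subset_right]; omega
  have swap : ∀ j k : Color,
      (∃ Z : Finset (Fin 14), Z.card = 7 ∧ Z ≠ Y ∧ Z ≠ X ∧ c Y Z = k ∧ c X Z = j) →
      ∃ Z : Finset (Fin 14), Z.card = 7 ∧ Z ≠ X ∧ Z ≠ Y ∧ c X Z = j ∧ c Y Z = k := by
    rintro j k ⟨Z, h1, h2, h3, h4, h5⟩
    exact ⟨Z, h1, h3, h2, h5, h4⟩
  cases j <;> cases k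
  · exact rr
  · exact redb X Y hX hY h5 _ (by decide)
  · exact redb X Y hX hY h5 _ (by decide)
  · exact swap _ _ (redb Y X hY hX h5' _ (by decide))
  · exact same _ (by decide)
  · exact mixed X Y hX hY h5
  · exact swap _ _ (redb Y X hY hX h5' _ (by decide))
  · exact swap _ _ (mixed Y X hY hX h5')
  · exact same _ (by decide)
end

section
/- (6-edge case) Let s be a splitting coloring of P = {1,…,14} with no monochromatic K₄, no monochromatic K_{4,3}, and no monochromatic K_{5,2}, and let c be the induced coloring on 7-element subsets of P. Then for all 7-element subsets X, Y of P with |X ∩ Y| = 6 (so c(XY) = r) and every triple (r, j, k) ∈ M₂, there exists a 7-element subset Z of P, distinct from X and Y, with c(XZ) = j and c(YZ) = k. -/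
set_option maxHeartbeats 2000000

theorem six_ext (X Y A : Finset (Fin 14)) (hU : (X ∪ Y).card = 8) (hA : A ⊆ X ∪ Y)
    (h1 : 1 ≤ A.card) (h7 : A.card ≤ 7) :
    ∃ Z : Finset (Fin 14), Z.card = 7 ∧ X ∩ Z = X ∩ A ∧ Y ∩ Z = Y ∩ A := by
  have hc : (X ∪ Y)ᶜ.card = 6 := by
    rw [Finset.card_compl, hU]; rfl
  obtain ⟨W, hW, hWc⟩ := Finset.exists_subset_card_eq (s := (X ∪ Y)ᶜ) (n := 7 - A.card) (by omega)
  have hW' : ∀ w ∈ W, w ∉ X ∧ w ∉ Y := by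
    intro w hw
    have := hW hw
    simpa using this
  refine ⟨A ∪ W, ?_, ?_, ?_⟩
  · rw [Finset.card_union_of_disjoint, hWc]
    · omega
    · rw [Finset.disjoint_left]
      intro a ha hw
      have := hW' a hw
      have := hA ha
      simp only [Finset.mem_union] at this
      tauto
  · ext a
    have := hW' a
    simp only [Finset.mem_union, Finset.mem_inter]
    tauto
  · ext a
    have := hW' a
    simp only [Finset.mem_union, Finset.mem_inter]
    tauto

/-- (6-edge case) For 7-element subsets `X`, `Y` with `|X ∩ Y| = 6` (so `c(XY) = r`),
every need `(r, j, k) ∈ M₂` of the edge `XY` has a witness: a 7-element subset `Z`,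
distinct from `X` and `Y`, with `c(XZ) = j` and `c(YZ) = k`. -/
theorem six_edge_needs_met
    -- `s` is a splitting coloring: symmetric with values in {b₀, b₁}
    (s : Fin 14 → Fin 14 → Color)
    (hssym : ∀ i j : Fin 14, i ≠ j → s i j = s j i)
    (hsblue : ∀ i j : Fin 14, i ≠ j → s i j = Color.b0 ∨ s i j = Color.b1)
    -- `s` has no monochromatic K₄
    (hK4 : ¬ ∃ (b : Color) (W : Finset (Fin 14)), W.card = 4 ∧
      ∀ i ∈ W, ∀ j ∈ W, i ≠ j → s i j = b)
    -- `s` has no monochromatic K_{4,3}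
    (hK43 : ¬ ∃ (b : Color) (A B : Finset (Fin 14)), Disjoint A B ∧ A.card = 4 ∧ B.card = 3 ∧
      ∀ i ∈ A, ∀ j ∈ B, s i j = b)
    -- `s` has no monochromatic K_{5,2}
    (hK52 : ¬ ∃ (b : Color) (A B : Finset (Fin 14)), Disjoint A B ∧ A.card = 5 ∧ B.card = 2 ∧
      ∀ i ∈ A, ∀ j ∈ B, s i j = b)
    -- `c` is the coloring on 7-element subsets induced by `s`
    (c : Finset (Fin 14) → Finset (Fin 14) → Color)
    (hc0 : ∀ X Y : Finset (Fin 14), X.card = 7 → Y.card = 7 →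
      (X ∩ Y).card = 0 → c X Y = Color.b0)
    (hc1 : ∀ X Y : Finset (Fin 14), X.card = 7 → Y.card = 7 →
      (X ∩ Y).card = 1 → c X Y = Color.b1)
    (hc2 : ∀ X Y : Finset (Fin 14), X.card = 7 → Y.card = 7 → ∀ i j : Fin 14, i ≠ j →
      X ∩ Y = {i, j} → c X Y = s i j)
    (hcr : ∀ X Y : Finset (Fin 14), X.card = 7 → Y.card = 7 → X ≠ Y →
      3 ≤ (X ∩ Y).card → c X Y = Color.r)
    :
    ∀ X Y : Finset (Fin 14), X.card = 7 → Y.card = 7 → (X ∩ Y).card = 6 →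
      ∀ j k : Color, M2 (Color.r, j, k) →
      ∃ Z : Finset (Fin 14), Z.card = 7 ∧ Z ≠ X ∧ Z ≠ Y ∧ c X Z = j ∧ c Y Z = k := by
  intro X Y hX hY hXY j k _
  have hU : (X ∪ Y).card = 8 := by
    have := Finset.card_union_add_card_inter X Y
    omega
  -- the two private points
  obtain ⟨x, hx⟩ := Finset.card_eq_one.1 (show (X \ Y).card = 1 by
    have := Finset.card_sdiff_add_card_inter X Y
    omega)
  obtain ⟨y, hy⟩ := Finset.card_eq_one.1 (show (Y \ X).card = 1 by
    have := Finset.card_sdiff_add_card_inter Y X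
    rw [Finset.inter_comm] at this
    omega)
  have hx' : x ∈ X ∧ x ∉ Y := by
    have : x ∈ X \ Y := by rw [hx]; simp
    simpa using this
  have hy' : y ∈ Y ∧ y ∉ X := by
    have : y ∈ Y \ X := by rw [hy]; simp
    simpa using this
  obtain ⟨hxX, hxY⟩ := hx'
  obtain ⟨hyY, hyX⟩ := hy'
  have hxy : x ≠ y := fun h => hxY (h ▸ hyY)
  -- both blues occur in the common part
  obtain ⟨Q, hQ, hQc⟩ := Finset.exists_subset_card_eq (s := X ∩ Y) (n := 4) (by omega)
  have key : ∀ b : Color, b ≠ Color.r →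
      ∃ p q, p ≠ q ∧ s p q = b ∧ p ∈ X ∧ p ∈ Y ∧ q ∈ X ∧ q ∈ Y := by
    intro b hb
    by_contra hcon
    apply hK4
    refine ⟨if b = Color.b0 then Color.b1 else Color.b0, Q, hQc, ?_⟩
    intro p hp q hq hpq
    have h1 := Finset.mem_inter.1 (hQ hp)
    have h2 := Finset.mem_inter.1 (hQ hq)
    have h3 : s p q ≠ b := fun h => hcon ⟨p, q, hpq, h, h1.1, h1.2, h2.1, h2.2⟩
    rcases hsblue p q hpq with h | h <;> cases b <;> simp_all
  have fin : ∀ Z : Finset (Fin 14), Z.card = 7 → (X ∩ Z).card ≤ 3 → (Y ∩ Z).card ≤ 3 →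
      Z ≠ X ∧ Z ≠ Y := by
    intro Z hZ h1 h2
    constructor
    · rintro rfl
      simp at h1; omega
    · rintro rfl
      simp at h2; omega
  -- general recipe
  have main : ∀ A : Finset (Fin 14), A ⊆ X ∪ Y → 1 ≤ A.card → A.card ≤ 7 →
      (X ∩ A).card ≤ 3 → (Y ∩ A).card ≤ 3 →
      (∀ Z : Finset (Fin 14), Z.card = 7 → Z ≠ X → Z ≠ Y → X ∩ Z = X ∩ A → Y ∩ Z = Y ∩ A →
        c X Z = j ∧ c Y Z = k) →
      ∃ Z : Finset (Fin 14), Z.card = 7 ∧ Z ≠ X ∧ Z ≠ Y ∧ c X Z = j ∧ c Y Z = k := by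
    intro A hA h1 h7 hXA hYA h
    obtain ⟨Z, hZ, e1, e2⟩ := six_ext X Y A hU hA h1 h7
    obtain ⟨n1, n2⟩ := fin Z hZ (e1 ▸ hXA) (e2 ▸ hYA)
    exact ⟨Z, hZ, n1, n2, h Z hZ n1 n2 e1 e2⟩
  -- exactly one blue
  have one : ∀ p q, p ≠ q → p ∈ X → p ∈ Y → q ∈ X → q ∈ Y →
      (X ∩ {x, p, q} = {x, p, q} ∧ Y ∩ {x, p, q} = {p, q} ∧
       X ∩ {y, p, q} = {p, q} ∧ Y ∩ {y, p, q} = {y, p, q} ∧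
       X ∩ {p, q} = {p, q} ∧ Y ∩ {p, q} = {p, q} ∧
       ({x, p, q} : Finset (Fin 14)).card = 3 ∧ ({y, p, q} : Finset (Fin 14)).card = 3 ∧
       ({p, q} : Finset (Fin 14)).card = 2 ∧
       ({x, p, q} : Finset (Fin 14)) ⊆ X ∪ Y ∧ ({y, p, q} : Finset (Fin 14)) ⊆ X ∪ Y ∧
       ({p, q} : Finset (Fin 14)) ⊆ X ∪ Y) := by
    intro p q hpq a1 a2 a3 a4
    have n1 : x ≠ p := fun h => hxY (h ▸ a2)
    have n2 : x ≠ q := fun h => hxY (h ▸ a4)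
    have n3 : y ≠ p := fun h => hyX (h ▸ a1)
    have n4 : y ≠ q := fun h => hyX (h ▸ a3)
    refine ⟨?_, ?_, ?_, ?_, ?_, ?_, ?_, ?_, ?_, ?_, ?_, ?_⟩
    all_goals first
      | (rw [Finset.card_eq_three]; exact ⟨_, _, _, ‹_›, ‹_›, ‹_›, rfl⟩)
      | exact Finset.card_pair hpq
      | (intro a; simp only [Finset.mem_union, Finset.mem_insert, Finset.mem_singleton]; grind)
      | (ext a; simp only [Finset.mem_inter, Finset.mem_insert, Finset.mem_singleton]; grind)
  have rb : j = Color.r → k ≠ Color.r →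
      ∃ Z : Finset (Fin 14), Z.card = 7 ∧ Z ≠ X ∧ Z ≠ Y ∧ c X Z = j ∧ c Y Z = k := by
    intro hj hk
    obtain ⟨p, q, hpq, hs, a1, a2, a3, a4⟩ := key k hk
    obtain ⟨o1, o2, o3, o4, o5, o6, o7, o8, o9, o10, o11, o12⟩ := one p q hpq a1 a2 a3 a4
    refine main {x, p, q} o10 (by omega) (by omega) (by rw [o1]; omega) (by rw [o2]; omega) ?_
    intro Z hZ n1 n2 e1 e2
    rw [o1] at e1
    rw [o2] at e2
    exact ⟨hj ▸ hcr X Z hX hZ n1.symm (by rw [e1]; omega), hs ▸ hc2 Y Z hY hZ p q hpq e2⟩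
  have br : j ≠ Color.r → k = Color.r →
      ∃ Z : Finset (Fin 14), Z.card = 7 ∧ Z ≠ X ∧ Z ≠ Y ∧ c X Z = j ∧ c Y Z = k := by
    intro hj hk
    obtain ⟨p, q, hpq, hs, a1, a2, a3, a4⟩ := key j hj
    obtain ⟨o1, o2, o3, o4, o5, o6, o7, o8, o9, o10, o11, o12⟩ := one p q hpq a1 a2 a3 a4
    refine main {y, p, q} o11 (by omega) (by omega) (by rw [o3]; omega) (by rw [o4]; omega) ?_
    intro Z hZ n1 n2 e1 e2
    rw [o3] at e1
    rw [o4] at e2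
    exact ⟨hs ▸ hc2 X Z hX hZ p q hpq e1, hk ▸ hcr Y Z hY hZ n2.symm (by rw [e2]; omega)⟩
  have bb : j = k → j ≠ Color.r →
      ∃ Z : Finset (Fin 14), Z.card = 7 ∧ Z ≠ X ∧ Z ≠ Y ∧ c X Z = j ∧ c Y Z = k := by
    intro hjk hj
    obtain ⟨p, q, hpq, hs, a1, a2, a3, a4⟩ := key j hj
    obtain ⟨o1, o2, o3, o4, o5, o6, o7, o8, o9, o10, o11, o12⟩ := one p q hpq a1 a2 a3 a4
    refine main {p, q} o12 (by omega) (by omega) (by rw [o5]; omega) (by rw [o6]; omega) ?_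
    intro Z hZ n1 n2 e1 e2
    rw [o5] at e1
    rw [o6] at e2
    exact ⟨hs ▸ hc2 X Z hX hZ p q hpq e1, hjk ▸ hs ▸ hc2 Y Z hY hZ p q hpq e2⟩
  have rr : j = Color.r → k = Color.r →
      ∃ Z : Finset (Fin 14), Z.card = 7 ∧ Z ≠ X ∧ Z ≠ Y ∧ c X Z = j ∧ c Y Z = k := by
    intro hj hk
    obtain ⟨T, hT, hTc⟩ := Finset.exists_subset_card_eq (s := X ∩ Y) (n := 3) (by omega)
    have t1 : X ∩ T = T := Finset.inter_eq_right.2 (hT.trans Finset.inter_subset_left)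
    have t2 : Y ∩ T = T := Finset.inter_eq_right.2 (hT.trans Finset.inter_subset_right)
    refine main T ((hT.trans Finset.inter_subset_left).trans Finset.subset_union_left)
      (by omega) (by omega) (by rw [t1]; omega) (by rw [t2]; omega) ?_
    intro Z hZ n1 n2 e1 e2
    rw [t1] at e1
    rw [t2] at e2
    exact ⟨hj ▸ hcr X Z hX hZ n1.symm (by rw [e1]; omega),
      hk ▸ hcr Y Z hY hZ n2.symm (by rw [e2]; omega)⟩
  have b10 : j = Color.b1 → k = Color.b0 →
      ∃ Z : Finset (Fin 14), Z.card = 7 ∧ Z ≠ X ∧ Z ≠ Y ∧ c X Z = j ∧ c Y Z = k := by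
    intro hj hk
    have t1 : X ∩ {x} = {x} := Finset.inter_singleton_of_mem hxX
    have t2 : Y ∩ {x} = ∅ := Finset.inter_singleton_of_notMem hxY
    refine main {x} (by simp [hxX]) (by simp) (by simp) (by simp [t1]) (by simp [t2]) ?_
    intro Z hZ n1 n2 e1 e2
    exact ⟨hj ▸ hc1 X Z hX hZ (by simp [e1, t1]), hk ▸ hc0 Y Z hY hZ (by simp [e2, t2])⟩
  have b01 : j = Color.b0 → k = Color.b1 →
      ∃ Z : Finset (Fin 14), Z.card = 7 ∧ Z ≠ X ∧ Z ≠ Y ∧ c X Z = j ∧ c Y Z = k := by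
    intro hj hk
    have t1 : X ∩ {y} = ∅ := Finset.inter_singleton_of_notMem hyX
    have t2 : Y ∩ {y} = {y} := Finset.inter_singleton_of_mem hyY
    refine main {y} (by simp [hyY]) (by simp) (by simp) (by simp [t1]) (by simp [t2]) ?_
    intro Z hZ n1 n2 e1 e2
    exact ⟨hj ▸ hc0 X Z hX hZ (by simp [e1, t1]), hk ▸ hc1 Y Z hY hZ (by simp [e2, t2])⟩
  cases j <;> cases k <;> first
    | exact rr rfl rfl
    | exact b10 rfl rfl
    | exact b01 rfl rfl
    | exact bb rfl (by simp)
    | exact rb rfl (by simp)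
    | exact br (by simp) rfl
end
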